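/- Let R and B be disjoint finite sets of points in the plane with |R| = r and |B| = b = r + 2δ for some integer δ ≥ 0, and suppose S = R ∪ B is in general position. Then the number of lines that pass through a point of B and a point of R and such that each of the two open half-planes they bound has weight δ is at least r. -/

import Mathlib

/-!
Rotating a direction through a half-turn sorts the points of `S = R ∪ B` in a sequence of orders in
which two neighbours are exchanged at each step and which ends with the reversed order
(`Sweep`, `Ranking`, `exists_ranking`). An exchange of points `x, y` corresponds to the line through
them, and the points before `x, y` are those on one side of that line. So a balanced line is an
exchange of points of different colours preceded by total weight `δ` (`exists_balancedPair`), and it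
suffices to find `r` such exchanges in a half-period.

For `1 ≤ j ≤ r` let the sign of row `j` at time `t` tell whether the first `δ + 2 * j - 1` points have
weight greater than `δ`; by parity the weight is never equal to `δ`. Put `false` below row `1` and
`true` above row `r`. A sign changes only at a balanced exchange (`Sweep.balancedSwap_of_flip`), so it
suffices to find `r` sign changes in a half-period `T`. This field of signs is antiperiodic: time
`t + T` shows time `t` upside down and negated.

Consider the curves in the strip that separate `false` from `true`, oriented forward in time where the
sign increases with the row and backward where it decreases. Each column contributes a net advance of
`1`, so over a half-period the closed curves advance by `T` in total, and therefore one of them closes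
up after an odd number of half-periods (`SignField.exists_odd_orbit`). Each sign change is used by at
most one change of height of the curves, so the vertical variation of this curve is at most the number
of sign changes (`SignField.move_unique`, `SignField.sum_moves_le`, `SignField.exists_path`).

Follow the points of one colour `C` among the first `δ + 2 * k` points along this curve, where `(t, k)`
is the current wall. Those first points have weight `δ`, and the two points next to the cut are both
blue if the sign increases and both red if it decreases (`Sweep.wall_props`). Choosing for `C` the
other colour (red if the curve advances, blue if it recedes and is traversed backwards), the followed
set does not change when time advances (`Sweep.seg_step`), and at a fixed time it changes by the change
of `k` (`Sweep.card_symmDiff_seg`). After an odd number of half-periods the order is reversed and the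
set has become its complement in `C`. Hence `r ≤ |C|` is at most the vertical variation of the curve
(`Sweep.card_le_balancedSwaps`).
-/

open scoped Classical

/-- Orientation determinant of the points `q - p` and `x - p`:
positive iff `x` lies in the open half-plane to the left of the directed
line from `p` to `q`, negative iff to the right, zero iff collinear. -/
def cross (p q x : ℝ × ℝ) : ℝ :=
  (q.1 - p.1) * (x.2 - p.2) - (q.2 - p.2) * (x.1 - p.1)

/-- A finite point set is in general position if no three (distinct) of its
points are collinear. -/
def GenPos (S : Finset (ℝ × ℝ)) : Prop :=
  ∀ p ∈ S, ∀ q ∈ S, ∀ x ∈ S, p ≠ q → p ≠ x → q ≠ x → cross p q x ≠ 0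

/-- Weight (number of blue minus number of red points) of the open half-plane
`{x | cross p q x > 0}` bounded by the line through `p` and `q`. -/
noncomputable def wPos (B R : Finset (ℝ × ℝ)) (p q : ℝ × ℝ) : ℤ :=
  ((B.filter (fun x => 0 < cross p q x)).card : ℤ) -
    ((R.filter (fun x => 0 < cross p q x)).card : ℤ)

/-- Weight of the other open half-plane `{x | cross p q x < 0}`. -/
noncomputable def wNeg (B R : Finset (ℝ × ℝ)) (p q : ℝ × ℝ) : ℤ :=
  ((B.filter (fun x => cross p q x < 0)).card : ℤ) -
    ((R.filter (fun x => cross p q x < 0)).card : ℤ)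

/-- The line through `p` and `q` is balanced: both open half-planes it bounds
have weight `δ`. -/
def BalancedLine (B R : Finset (ℝ × ℝ)) (δ : ℤ) (p q : ℝ × ℝ) : Prop :=
  wPos B R p q = δ ∧ wNeg B R p q = δ

/-- The balanced lines determined by `S = R ∪ B`, represented by the
(blue, red) pair of points of `S` spanning them.  In general position every
line contains at most two points of `S`, so these pairs are in bijection with
the balanced lines. -/
noncomputable def balancedPairs (B R : Finset (ℝ × ℝ)) (δ : ℤ) :
    Finset ((ℝ × ℝ) × (ℝ × ℝ)) :=
  (B ×ˢ R).filter (fun pq => BalancedLine B R δ pq.1 pq.2)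

/-! ### Orbit sums -/

/-- A sum over a finite type is divisible by `m` as soon as the sum over every orbit of a given
permutation is. -/
lemma dvd_sum_of_dvd_orbit_sum {X : Type*} [Fintype X] (f : X → X)
    (hf : Function.Injective f) (g : X → ℤ) (m : ℤ)
    (h : ∀ x, m ∣ ∑ i ∈ Finset.range (Function.minimalPeriod f x), g (f^[i] x)) :
    m ∣ ∑ x, g x := by
  suffices H : ∀ A : Finset X, (∀ x ∈ A, f x ∈ A) → m ∣ ∑ x ∈ A, g x from
    H Finset.univ (fun _ _ => Finset.mem_univ _)
  intro A
  induction A using Finset.strongInduction with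
  | H A ih =>
    intro hA
    rcases A.eq_empty_or_nonempty with rfl | ⟨x, hx⟩
    · simp
    have hp : 0 < Function.minimalPeriod f x :=
      Function.minimalPeriod_pos_of_mem_periodicPts (hf.mem_periodicPts x)
    set p := Function.minimalPeriod f x with hpdef
    have hinj : Set.InjOn (fun i => f^[i] x) (Finset.range p : Finset ℕ) := by
      intro i hi j hj hij
      exact Function.iterate_injOn_Iio_minimalPeriod (by simpa using hi) (by simpa using hj) hij
    set O := (Finset.range p).image (fun i => f^[i] x) with hO
    have hOA : O ⊆ A := by
      intro y hy
      simp only [hO, Finset.mem_image] at hy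
      obtain ⟨i, -, rfl⟩ := hy
      induction i with
      | zero => simpa using hx
      | succ i ih' => rw [Function.iterate_succ_apply']; exact hA _ ih'
    have hsum : ∑ y ∈ O, g y = ∑ i ∈ Finset.range p, g (f^[i] x) := Finset.sum_image hinj
    have hxO : x ∈ O := Finset.mem_image.2 ⟨0, by simpa using hp, rfl⟩
    have h1 : A \ O ⊂ A :=
      Finset.ssubset_iff_subset_ne.2 ⟨Finset.sdiff_subset, fun heq => by
        rw [← heq] at hx
        exact (Finset.mem_sdiff.1 hx).2 hxO⟩
    rw [← Finset.sum_sdiff hOA, hsum]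
    refine dvd_add (ih _ h1 ?_) (h x)
    intro y hy
    rw [Finset.mem_sdiff] at hy ⊢
    refine ⟨hA y hy.1, fun hfy => hy.2 ?_⟩
    simp only [hO, Finset.mem_image, Finset.mem_range] at hfy ⊢
    obtain ⟨i, hi, hiy⟩ := hfy
    rcases i with _ | i
    · refine ⟨p - 1, by omega, hf ?_⟩
      rw [← Function.iterate_succ_apply' f, ← hiy, Nat.succ_eq_add_one, Nat.sub_add_cancel hp]
      exact Function.iterate_minimalPeriod
    · refine ⟨i, by omega, hf ?_⟩
      rw [← Function.iterate_succ_apply' f, hiy]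

/-! ### Sign fields and their separating curves -/

/-- A field of signs on the strip of integer points `(t, j)`, `t` being the time and `j` the row.
Only the rows `1, …, r` carry information: the rows below are `false` and the rows above are `true`.
Shifting the time by the half-period `T` turns the picture upside down and negates it (`anti`), and
at most one sign changes between two consecutive times (`flip_unique`). -/
structure SignField where
  T : ℤ
  r : ℤ
  sgn : ℤ → ℤ → Bool
  T_pos : 0 < T
  r_nonneg : 0 ≤ r
  low : ∀ t j, j ≤ 0 → sgn t j = false
  high : ∀ t j, r < j → sgn t j = true
  anti : ∀ t j, sgn (t + T) (r + 1 - j) = !sgn t j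
  flip_unique : ∀ t i j, sgn t i ≠ sgn (t + 1) i → sgn t j ≠ sgn (t + 1) j → i = j

namespace SignField

variable (F : SignField)

/-- `(t, k)` is a wall if, at time `t`, the signs of the rows `k` and `k + 1` differ. -/
def Wall (e : ℤ × ℤ) : Prop := F.sgn e.1 e.2 ≠ F.sgn e.1 (e.2 + 1)

/-- The direction of time in which the wall `e` is followed: forward across a change from `false`
to `true` (read upwards), backward across a change from `true` to `false`. -/
noncomputable def eps (e : ℤ × ℤ) : ℤ := if F.sgn e.1 e.2 = true then -1 else 1

/-- The successor (`s = 1`) or predecessor (`s = -1`) of the wall `e` on the curve separating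
`false` from `true`, oriented with `false` on its right. If the wall `e` still exists at the next time
`t'`, the curve goes straight on. Otherwise exactly one of the two rows adjacent to `e` flips its
sign; the curve then crosses that row, and either continues at time `t'` or turns back at the
current time. -/
noncomputable def step (s : ℤ) (e : ℤ × ℤ) : ℤ × ℤ :=
  if F.Wall (e.1 + s * F.eps e, e.2) then (e.1 + s * F.eps e, e.2)
  else if F.sgn e.1 e.2 ≠ F.sgn (e.1 + s * F.eps e) e.2 then
    (if F.Wall (e.1 + s * F.eps e, e.2 - 1) then (e.1 + s * F.eps e, e.2 - 1)
      else (e.1, e.2 - 1))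
  else
    (if F.Wall (e.1 + s * F.eps e, e.2 + 1) then (e.1 + s * F.eps e, e.2 + 1)
      else (e.1, e.2 + 1))

lemma eps_cases (e : ℤ × ℤ) : F.eps e = 1 ∨ F.eps e = -1 := by
  unfold eps; split_ifs <;> simp

lemma flip_unique' {t t' i j : ℤ} (h : t' = t + 1 ∨ t' = t + -1)
    (hi : F.sgn t i ≠ F.sgn t' i) (hj : F.sgn t j ≠ F.sgn t' j) : i = j := by
  rcases h with rfl | rfl
  · exact F.flip_unique t i j hi hj
  · have := F.flip_unique (t + -1) i j
    rw [neg_add_cancel_right] at this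
    exact this hi.symm hj.symm

/-- The possible steps: straight on; across a row `j` whose sign flips, keeping the direction; or
across such a row, reversing the direction. -/
lemma step_cases {s : ℤ} (hs : s = 1 ∨ s = -1) {e : ℤ × ℤ} (he : F.Wall e) :
    ∃ t', t' = e.1 + s * F.eps e ∧ (t' = e.1 + 1 ∨ t' = e.1 + -1) ∧
    ((F.step s e = (t', e.2) ∧ F.Wall (t', e.2) ∧ F.sgn t' e.2 = F.sgn e.1 e.2) ∨
     (¬ F.Wall (t', e.2) ∧ ∃ k' j, (k' = e.2 - 1 ∧ j = e.2 ∨ k' = e.2 + 1 ∧ j = e.2 + 1) ∧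
       F.sgn e.1 j ≠ F.sgn t' j ∧
       ((F.step s e = (t', k') ∧ F.Wall (t', k') ∧ ¬ F.Wall (e.1, k') ∧
          F.sgn t' k' = F.sgn e.1 e.2) ∨
        (F.step s e = (e.1, k') ∧ ¬ F.Wall (t', k') ∧ F.Wall (e.1, k') ∧
          F.sgn e.1 k' ≠ F.sgn e.1 e.2)))) := by
  refine ⟨_, rfl, ?_, ?_⟩
  · rcases F.eps_cases e with h | h <;> rcases hs with rfl | rfl <;> simp [h]
  have ht : (e.1 + s * F.eps e = e.1 + 1 ∨ e.1 + s * F.eps e = e.1 + -1) := by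
    rcases F.eps_cases e with h | h <;> rcases hs with rfl | rfl <;> simp [h]
  unfold step
  generalize e.1 + s * F.eps e = t' at *
  obtain ⟨t, k⟩ := e
  simp only at *
  have hu : ∀ i j, F.sgn t i ≠ F.sgn t' i → F.sgn t j ≠ F.sgn t' j → i = j :=
    fun i j => F.flip_unique' ht
  by_cases h1 : F.Wall (t', k)
  · left
    simp only [h1, if_true, true_and]
    by_contra hc
    have h2 : F.sgn t (k+1) ≠ F.sgn t' (k+1) := by
      simp only [Wall] at *
      revert he h1 hc
      cases F.sgn t k <;> cases F.sgn t' k <;> cases F.sgn t (k+1) <;> cases F.sgn t' (k+1) <;> simp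
    have := hu k (k+1) (Ne.symm hc) h2
    omega
  · right
    refine ⟨h1, ?_⟩
    simp only [h1, if_false]
    by_cases h2 : F.sgn t k ≠ F.sgn t' k
    · refine ⟨k-1, k, Or.inl ⟨rfl, rfl⟩, h2, ?_⟩
      simp only [h2, if_true, ne_eq, not_false_eq_true]
      have h3 : F.sgn t (k-1) = F.sgn t' (k-1) := by
        by_contra hc
        have := hu _ _ hc h2
        omega
      have h4 : F.sgn t (k+1) = F.sgn t' (k+1) := by
        by_contra hc
        have := hu _ _ hc h2
        omega
      simp only [Wall, sub_add_cancel] at *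
      rw [h3] at *
      rw [h4] at *
      revert he h1 h2
      cases F.sgn t k <;> cases F.sgn t' k <;> cases F.sgn t' (k-1) <;> cases F.sgn t' (k+1) <;> simp
    · have h5 : F.sgn t k = F.sgn t' k := by simpa using h2
      have h2' : F.sgn t (k+1) ≠ F.sgn t' (k+1) := by
        simp only [Wall] at *
        revert he h1 h5
        cases F.sgn t k <;> cases F.sgn t' k <;> cases F.sgn t (k+1) <;> cases F.sgn t' (k+1) <;> simp
      refine ⟨k+1, k+1, Or.inr ⟨rfl, rfl⟩, h2', ?_⟩
      have h3 : F.sgn t (k+1+1) = F.sgn t' (k+1+1) := by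
        by_contra hc
        have := hu _ _ hc h2'
        omega
      simp only [h2, if_false]
      by_cases hw : F.Wall (t', k + 1) <;> simp only [hw, if_true, if_false] <;>
        simp only [Wall] at * <;> rw [h3] at * <;> revert he h1 h2' h5 hw <;>
        cases F.sgn t k <;> cases F.sgn t (k+1) <;> cases F.sgn t' k <;>
        cases F.sgn t' (k+1) <;> cases F.sgn t' (k+1+1) <;> simp

lemma eps_eq_iff {e e' : ℤ × ℤ} : F.eps e = F.eps e' ↔ F.sgn e.1 e.2 = F.sgn e'.1 e'.2 := by
  unfold eps
  cases F.sgn e.1 e.2 <;> cases F.sgn e'.1 e'.2 <;> simp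

lemma step_wall {s : ℤ} (hs : s = 1 ∨ s = -1) {e : ℤ × ℤ} (he : F.Wall e) :
    F.Wall (F.step s e) := by
  obtain ⟨t', -, -, h | ⟨-, k', j, -, -, h | h⟩⟩ := F.step_cases hs he
  · rw [h.1]; exact h.2.1
  · rw [h.1]; exact h.2.1
  · rw [h.1]; exact h.2.2.1

lemma step_step {s : ℤ} (hs : s = 1 ∨ s = -1) {e : ℤ × ℤ} (he : F.Wall e) :
    F.step (-s) (F.step s e) = e := by
  obtain ⟨t, k⟩ := e
  obtain ⟨t', ht', htt, h | ⟨h1, k', j, hk, hj, h | h⟩⟩ := F.step_cases hs he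
  · obtain ⟨h, h1, h2⟩ := h
    have h3 : F.eps (t', k) = F.eps (t, k) := F.eps_eq_iff.2 h2
    have h4 : t' + -s * F.eps (t, k) = t := by simp only at ht'; rw [ht']; ring
    rw [h, step]
    simp only at *
    rw [h3, h4, if_pos he]
  · obtain ⟨h, h3, h4, h5⟩ := h
    have h3 : F.eps (t', k') = F.eps (t, k) := F.eps_eq_iff.2 h5
    have h4' : t' + -s * F.eps (t, k) = t := by simp only at ht'; rw [ht']; ring
    rw [h, step]
    simp only at *
    rw [h3, h4', if_neg h4]
    rcases hk with ⟨rfl, rfl⟩ | ⟨rfl, rfl⟩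
    · have : F.sgn t' (j-1) = F.sgn t (j-1) := by
        by_contra hc
        have := F.flip_unique' htt hj (Ne.symm hc)
        omega
      simp [this, he]
    · simp [hj.symm, he]
  · obtain ⟨h, h3, h4, h5⟩ := h
    have h6 : F.eps (t, k') = - F.eps (t, k) := by
      have : ¬ (F.eps (t, k') = F.eps (t, k)) := fun h => h5 (F.eps_eq_iff.1 h)
      rcases F.eps_cases (t, k') with h | h <;> rcases F.eps_cases (t, k) with h' | h' <;> simp_all
    have h4' : t + -s * -F.eps (t, k) = t' := by simp only at ht'; rw [ht']; ring
    rw [h, step]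
    simp only at *
    rw [h6, h4', if_neg h3]
    rcases hk with ⟨rfl, rfl⟩ | ⟨rfl, rfl⟩
    · have : F.sgn t' (j-1) = F.sgn t (j-1) := by
        by_contra hc
        have := F.flip_unique' htt hj (Ne.symm hc)
        omega
      simp [this, h1]
    · simp [hj, h1]

/-- The abscissa at which the curve enters the unit time cell of the wall `e`: the cell of
time `t` is the interval from `t` to `t + 1`, entered from the left by forward walls and from the
right by backward walls. -/
noncomputable def entry (e : ℤ × ℤ) : ℤ := if F.sgn e.1 e.2 = true then e.1 + 1 else e.1

lemma entry_step {e : ℤ × ℤ} (he : F.Wall e) :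
    F.entry (F.step 1 e) = F.entry e + F.eps e := by
  obtain ⟨t', ht', -, h | ⟨-, k', j, -, -, h | h⟩⟩ := F.step_cases (Or.inl rfl) he
  · rw [h.1, entry, entry]
    simp only [h.2.2]
    rw [ht', eps]
    split_ifs <;> ring
  · rw [h.1, entry, entry]
    simp only [h.2.2.2]
    rw [ht', eps]
    split_ifs <;> ring
  · rw [h.1, entry, entry]
    have := h.2.2.2
    simp only [eps]
    revert this
    cases F.sgn e.1 k' <;> cases F.sgn e.1 e.2 <;> simp

/-- The field after `c` half-periods. -/
lemma sgn_shift (c t j : ℤ) :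
    F.sgn (t + c * F.T) j = if Even c then F.sgn t j else !F.sgn t (F.r + 1 - j) := by
  have key : ∀ t j, F.sgn (t + F.T) j = !F.sgn t (F.r + 1 - j) := by
    intro t j
    have := F.anti t (F.r + 1 - j)
    rwa [sub_sub_cancel] at this
  induction c using Int.induction_on generalizing j with
  | zero => simp
  | succ i ih =>
    rw [show t + ((i : ℤ) + 1) * F.T = t + i * F.T + F.T by ring, key, ih]
    by_cases h : Even (i : ℤ)
    · have : ¬ Even ((i : ℤ) + 1) := by simpa [Int.even_add_one] using h
      simp only [if_pos h, if_neg this]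
    · have : Even ((i : ℤ) + 1) := by rw [Int.even_add_one]; exact h
      simp only [if_pos this, if_neg h, Bool.not_not, sub_sub_cancel]
  | pred i ih =>
    have h1 := key (t + (-(i : ℤ) - 1) * F.T) (F.r + 1 - j)
    rw [show t + (-(i : ℤ) - 1) * F.T + F.T = t + (-(i : ℤ)) * F.T by ring, ih, sub_sub_cancel] at h1
    have h2 : F.sgn (t + (-(i : ℤ) - 1) * F.T) j
      = ! (if Even (-(i : ℤ)) then F.sgn t (F.r + 1 - j) else !F.sgn t j) := by
      rw [h1, Bool.not_not]
    rw [h2]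
    by_cases h : Even (-(i : ℤ))
    · have : ¬ Even (-(i : ℤ) - 1) := by rw [Int.even_sub_one]; simpa using h
      simp only [if_pos h, if_neg this]
    · have : Even (-(i : ℤ) - 1) := by rw [Int.even_sub_one]; exact h
      simp only [if_pos this, if_neg h, Bool.not_not]

/-- Translation of a wall by `c` half-periods, each of which reflects the strip top to bottom. -/
noncomputable def shift (c : ℤ) (e : ℤ × ℤ) : ℤ × ℤ :=
  (e.1 + c * F.T, if Even c then e.2 else F.r - e.2)

lemma shift_shift (c d : ℤ) (e : ℤ × ℤ) : F.shift c (F.shift d e) = F.shift (c + d) e := by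
  unfold shift
  ext
  · simp only; ring
  · by_cases hc : Even c <;> by_cases hd : Even d <;> simp [Int.even_add, hc, hd]

lemma shift_zero (e : ℤ × ℤ) : F.shift 0 e = e := by simp [shift]

lemma sgn_sub_shift {c : ℤ} (hc : ¬ Even c) (t j : ℤ) :
    F.sgn (t + c * F.T) (F.r - j) = !F.sgn t (j + 1) := by
  rw [sgn_shift, if_neg hc]; congr 2; ring

lemma wall_shift {c : ℤ} {e : ℤ × ℤ} : F.Wall (F.shift c e) ↔ F.Wall e := by
  unfold Wall shift
  by_cases h : Even c
  · simp only [if_pos h, sgn_shift]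
  · simp only [if_neg h]
    rw [show F.r - e.2 + 1 = F.r - (e.2 - 1) by ring, F.sgn_sub_shift h, F.sgn_sub_shift h,
      sub_add_cancel]
    cases F.sgn e.1 e.2 <;> cases F.sgn e.1 (e.2+1) <;> simp

lemma sgn_shift_wall {c : ℤ} {e : ℤ × ℤ} (he : F.Wall e) :
    F.sgn (F.shift c e).1 (F.shift c e).2 = F.sgn e.1 e.2 := by
  unfold Wall at he
  unfold shift
  by_cases h : Even c
  · simp only [if_pos h, sgn_shift]
  · simp only [if_neg h]
    rw [F.sgn_sub_shift h]
    revert he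
    cases F.sgn e.1 e.2 <;> cases F.sgn e.1 (e.2+1) <;> simp

lemma eps_shift {c : ℤ} {e : ℤ × ℤ} (he : F.Wall e) : F.eps (F.shift c e) = F.eps e :=
  F.eps_eq_iff.2 (F.sgn_shift_wall he)

lemma entry_shift {c : ℤ} {e : ℤ × ℤ} (he : F.Wall e) :
    F.entry (F.shift c e) = F.entry e + c * F.T := by
  rw [entry, F.sgn_shift_wall he, entry]
  simp only [shift]
  split_ifs <;> ring

lemma step_shift {s : ℤ} (hs : s = 1 ∨ s = -1) (c : ℤ) {e : ℤ × ℤ} (he : F.Wall e) :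
    F.step s (F.shift c e) = F.shift c (F.step s e) := by
  obtain ⟨t', ht', htt, h⟩ := F.step_cases hs he
  have h1 : (F.shift c e).1 + s * F.eps (F.shift c e) = t' + c * F.T := by
    rw [F.eps_shift he, ht']; simp only [shift]; ring
  have hw : ∀ t k, F.Wall (t + c * F.T, if Even c then k else F.r - k) ↔ F.Wall (t, k) :=
    fun t k => F.wall_shift (c := c) (e := (t, k))
  obtain ⟨t, k⟩ := e
  rw [step, h1]
  simp only [shift, hw]
  simp only at *
  rcases h with h | ⟨h2, k', j, hk, hj, h⟩
  · rw [h.1, if_pos h.2.1]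
  rw [if_neg h2]
  have hother : F.sgn t (2 * k + 1 - j) = F.sgn t' (2 * k + 1 - j) := by
    by_contra hc
    have := F.flip_unique' htt hj hc
    omega
  by_cases hc : Even c
  · simp only [if_pos hc, sgn_shift] at hw ⊢
    simp only [hw]
    rcases hk with ⟨rfl, rfl⟩ | ⟨rfl, rfl⟩
    · rw [if_pos hj]
      rcases h with h | h
      · rw [h.1, if_pos h.2.1]
      · rw [h.1, if_neg h.2.1]
    · rw [show 2 * k + 1 - (k + 1) = k by ring] at hother
      simp only [hother, ne_eq, not_true_eq_false, if_false]
      rcases h with h | h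
      · rw [h.1, if_pos h.2.1]
      · rw [h.1, if_neg h.2.1]
  · simp only [if_neg hc, F.sgn_sub_shift hc] at hw ⊢
    rw [show F.r - k - 1 = F.r - (k + 1) by ring, show F.r - k + 1 = F.r - (k - 1) by ring]
    simp only [hw]
    rcases hk with ⟨rfl, rfl⟩ | ⟨rfl, rfl⟩
    · rw [show 2 * j + 1 - j = j + 1 by ring] at hother
      simp only [hother, ne_eq, not_true_eq_false, if_false]
      rcases h with h | h
      · rw [h.1, if_pos h.2.1]
      · rw [h.1, if_neg h.2.1]
    · have : (!F.sgn t (k+1)) ≠ (!F.sgn t' (k+1)) := by simpa using hj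
      rw [if_pos this]
      rcases h with h | h
      · rw [h.1, if_pos h.2.1]
      · rw [h.1, if_neg h.2.1]


/-- The representative of `e` modulo `shift` whose time lies in `[0, T)`. -/
noncomputable def norm (e : ℤ × ℤ) : ℤ × ℤ := F.shift (-(e.1 / F.T)) e

lemma norm_shift (c : ℤ) (e : ℤ × ℤ) : F.norm (F.shift c e) = F.norm e := by
  unfold norm
  rw [shift_shift]
  congr 1
  simp only [shift]
  rw [Int.add_mul_ediv_right _ _ F.T_pos.ne']
  ring

/-- The walls in the fundamental domain `0 ≤ t < T` of `shift`. -/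
abbrev Dom : Type := {e : ℤ × ℤ // F.Wall e ∧ 0 ≤ e.1 ∧ e.1 < F.T}

lemma wall_range {e : ℤ × ℤ} (he : F.Wall e) : 0 ≤ e.2 ∧ e.2 ≤ F.r := by
  unfold Wall at he
  constructor
  · by_contra h
    exact he (by rw [F.low _ _ (by omega), F.low _ _ (by omega)])
  · by_contra h
    exact he (by rw [F.high _ _ (by omega), F.high _ _ (by omega)])

lemma norm_mem {e : ℤ × ℤ} (he : F.Wall e) :
    F.Wall (F.norm e) ∧ 0 ≤ (F.norm e).1 ∧ (F.norm e).1 < F.T := by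
  refine ⟨F.wall_shift.2 he, ?_⟩
  have h1 : (F.norm e).1 = e.1 % F.T := by
    simp only [norm, shift, Int.emod_def]; ring
  rw [h1]
  exact ⟨Int.emod_nonneg _ F.T_pos.ne', Int.emod_lt_of_pos _ F.T_pos⟩

lemma norm_of_dom (x : F.Dom) : F.norm x.1 = x.1 := by
  unfold norm
  rw [Int.ediv_eq_zero_of_lt x.2.2.1 x.2.2.2, neg_zero, shift_zero]

/-- The permutation of the walls of the fundamental domain induced by `step 1`. -/
noncomputable def next (x : F.Dom) : F.Dom :=
  ⟨F.norm (F.step 1 x.1), F.norm_mem (F.step_wall (Or.inl rfl) x.2.1)⟩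

lemma norm_step_norm {s : ℤ} (hs : s = 1 ∨ s = -1) {e : ℤ × ℤ} (he : F.Wall e) :
    F.norm (F.step s (F.norm e)) = F.norm (F.step s e) := by
  rw [show F.norm e = F.shift (-(e.1 / F.T)) e from rfl, F.step_shift hs _ he, norm_shift]

lemma next_injective : Function.Injective F.next := by
  have key : ∀ x : F.Dom, F.norm (F.step (-1) (F.next x).1) = x.1 := by
    intro x
    have := F.norm_step_norm (s := -1) (Or.inr rfl) (F.step_wall (Or.inl rfl) x.2.1)
    rw [show (F.next x).1 = F.norm (F.step 1 x.1) from rfl, this, F.step_step (Or.inl rfl) x.2.1,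
      norm_of_dom]
  intro x y hxy
  apply Subtype.ext
  rw [← key x, hxy, key y]

lemma dom_iff (e : ℤ × ℤ) : (F.Wall e ∧ 0 ≤ e.1 ∧ e.1 < F.T) ↔
    e ∈ (Finset.Ico 0 F.T ×ˢ Finset.Ico 0 (F.r + 1)).filter F.Wall := by
  simp only [Finset.mem_filter, Finset.mem_product, Finset.mem_Ico]
  constructor
  · rintro ⟨h, h1, h2⟩
    have := F.wall_range h
    exact ⟨⟨⟨h1, h2⟩, this.1, by omega⟩, h⟩
  · rintro ⟨⟨⟨h1, h2⟩, -⟩, h⟩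
    exact ⟨h, h1, h2⟩

noncomputable instance : Fintype F.Dom := Fintype.subtype _ (fun e => (F.dom_iff e).symm)

/-- Every column starts with `false` and ends with `true`, so its forward walls exceed its
backward walls by exactly one; summing over a half-period gives `T`. -/
lemma sum_eps : ∑ x : F.Dom, F.eps x.1 = F.T := by
  have h1 : ∑ x : F.Dom, F.eps x.1
      = ∑ e ∈ (Finset.Ico 0 F.T ×ˢ Finset.Ico 0 (F.r + 1)).filter F.Wall, F.eps e :=
    (Finset.sum_subtype _ (fun e => (F.dom_iff e).symm) F.eps).symm
  rw [h1, Finset.sum_filter, Finset.sum_product]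
  have h2 : ∀ t, ∑ k ∈ Finset.Ico 0 (F.r + 1), (if F.Wall (t, k) then F.eps (t, k) else 0) = 1 := by
    intro t
    set v : ℤ → ℤ := fun j => if F.sgn t j = true then 1 else 0 with hv
    have h3 : ∀ k, (if F.Wall (t, k) then F.eps (t, k) else 0) = v (k + 1) - v k := by
      intro k
      by_cases hw : F.Wall (t, k)
      · rw [if_pos hw]
        revert hw
        simp only [Wall, eps, hv]
        cases F.sgn t k <;> cases F.sgn t (k + 1) <;> simp
      · rw [if_neg hw]
        simp only [Wall, not_not] at hw
        simp [hv, hw]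
    simp only [h3]
    have h4 : ∀ n : ℕ, ∑ k ∈ Finset.Ico (0 : ℤ) n, (v (k + 1) - v k) = v n - v 0 := by
      intro n
      induction n with
      | zero => simp
      | succ n ih =>
        rw [Nat.cast_succ, ← Finset.insert_Ico_right_eq_Ico_add_one (by positivity),
          Finset.sum_insert (by simp), ih]
        ring
    have h5 := h4 (F.r + 1).toNat
    rw [Int.toNat_of_nonneg (by have := F.r_nonneg; omega)] at h5
    rw [h5]
    simp [hv, F.low t 0 le_rfl, F.high t (F.r + 1) (by omega)]
  simp only [h2]
  simp [F.T_pos.le]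

lemma iterate_wall {e : ℤ × ℤ} (he : F.Wall e) (i : ℕ) : F.Wall ((F.step 1)^[i] e) := by
  induction i with
  | zero => exact he
  | succ i ih => rw [Function.iterate_succ_apply']; exact F.step_wall (Or.inl rfl) ih

lemma next_iterate (x : F.Dom) (i : ℕ) :
    (F.next^[i] x).1 = F.norm ((F.step 1)^[i] x.1) := by
  induction i with
  | zero => exact (F.norm_of_dom x).symm
  | succ i ih =>
    rw [Function.iterate_succ_apply', Function.iterate_succ_apply']
    change F.norm (F.step 1 (F.next^[i] x).1) = _
    rw [ih, F.norm_step_norm (Or.inl rfl) (F.iterate_wall x.2.1 i)]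

/-- Some curve of walls closes up after an odd number of half-periods. The net time advance of an
orbit of `next` is a multiple of `T`, and the advances add up to `T` by `sum_eps`, so they cannot all
be multiples of `2 * T`. -/
lemma exists_odd_orbit : ∃ (x : F.Dom) (c : ℤ), Odd c ∧
    (F.step 1)^[Function.minimalPeriod F.next x] x.1 = F.shift c x.1 := by
  by_contra hcon
  push Not at hcon
  have hdvd : 2 * F.T ∣ ∑ x : F.Dom, F.eps x.1 := by
    refine dvd_sum_of_dvd_orbit_sum F.next F.next_injective (fun x => F.eps x.1) _ ?_
    intro x
    set p := Function.minimalPeriod F.next x with hp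
    have h1 : (F.next^[p] x).1 = x.1 := by
      rw [Function.iterate_minimalPeriod]
    rw [next_iterate, norm] at h1
    set d := ((F.step 1)^[p] x.1).1 / F.T with hd
    have h2 : (F.step 1)^[p] x.1 = F.shift d x.1 := by
      have h2 := congrArg (F.shift d) h1
      rwa [shift_shift, add_neg_cancel, shift_zero] at h2
    have h3 : Even d := by
      by_contra hc
      exact hcon x d (Int.not_even_iff_odd.1 hc) h2
    have h4 : ∀ i, F.entry ((F.step 1)^[i] x.1)
        = F.entry x.1 + ∑ j ∈ Finset.range i, F.eps (F.next^[j] x).1 := by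
      intro i
      induction i with
      | zero => simp
      | succ i ih =>
        rw [Function.iterate_succ_apply', F.entry_step (F.iterate_wall x.2.1 i), ih,
          Finset.sum_range_succ, next_iterate, norm, F.eps_shift (F.iterate_wall x.2.1 i)]
        ring
    have h5 := h4 p
    rw [h2, F.entry_shift x.2.1] at h5
    have h6 : ∑ j ∈ Finset.range p, F.eps (F.next^[j] x).1 = d * F.T := by linarith
    rw [h6]
    obtain ⟨a, ha⟩ := h3
    exact ⟨a, by rw [ha]; ring⟩
  rw [sum_eps] at hdvd
  have := Int.le_of_dvd F.T_pos hdvd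
  have := F.T_pos
  omega

/-! ### Sign changes bound the vertical variation -/

/-- Some sign changes between the times `u` and `u + 1`. -/
def Flip (u : ℤ) : Prop := ∃ j, F.sgn u j ≠ F.sgn (u + 1) j

/-- The time `u` such that `step 1` compares `e` with the column on the other side of the transition
from `u` to `u + 1`. -/
noncomputable def trans (e : ℤ × ℤ) : ℤ := if F.sgn e.1 e.2 = true then e.1 - 1 else e.1

lemma trans_shift {c : ℤ} {e : ℤ × ℤ} (he : F.Wall e) :
    F.trans (F.shift c e) = F.trans e + c * F.T := by
  rw [trans, F.sgn_shift_wall he, trans]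
  simp only [shift]
  split_ifs <;> ring

lemma flip_of_move {e : ℤ × ℤ} (he : F.Wall e) (h : (F.step 1 e).2 ≠ e.2) :
    F.Flip (F.trans e) := by
  obtain ⟨t', ht', htt, h1 | ⟨h1, k', j, hk, hj, h2⟩⟩ := F.step_cases (Or.inl rfl) he
  · rw [h1.1] at h; exact absurd rfl h
  refine ⟨j, ?_⟩
  rw [ht', eps] at hj
  unfold trans
  split_ifs at hj ⊢ with h3
  · simpa [sub_eq_add_neg] using hj.symm
  · simpa using hj

lemma not_wall_of_move {e : ℤ × ℤ} (he : F.Wall e) (h : (F.step 1 e).2 ≠ e.2) :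
    ¬ F.Wall (e.1 + F.eps e, e.2) := by
  obtain ⟨t', ht', htt, h1 | ⟨h1, k', j, hk, hj, h2⟩⟩ := F.step_cases (Or.inl rfl) he
  · rw [h1.1] at h; exact absurd rfl h
  rwa [ht', one_mul] at h1

/-- Each flip is responsible for at most one change of height in the curves of walls. -/
lemma move_unique {e e' : ℤ × ℤ} (he : F.Wall e) (he' : F.Wall e')
    (h : (F.step 1 e).2 ≠ e.2) (h' : (F.step 1 e').2 ≠ e'.2) (ht : F.trans e = F.trans e') :
    e = e' := by
  have h1 := F.not_wall_of_move he h
  have h1' := F.not_wall_of_move he' h'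
  obtain ⟨u, hu⟩ : ∃ u, u = F.trans e := ⟨_, rfl⟩
  have ht' : u = F.trans e' := hu.trans ht
  have hf := F.flip_unique u
  obtain ⟨t, k⟩ := e
  obtain ⟨t', k'⟩ := e'
  simp only [Wall, eps, trans] at he he' h1 h1' hu ht'
  clear h h' ht
  by_cases hs : F.sgn t k = true <;> by_cases hs' : F.sgn t' k' = true <;>
    simp only [hs, hs', if_true, if_false, Bool.false_eq_true] at he he' h1 h1' hu ht'
  · obtain rfl : t = u + 1 := by omega
    obtain rfl : t' = u + 1 := by omega
    have : k = k' := by cases hx : F.sgn u k <;> cases hy : F.sgn u k' <;> grind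
    rw [this]
  · obtain rfl : t = u + 1 := by omega
    obtain rfl : t' = u := by omega
    exfalso
    cases hx : F.sgn t' k <;> cases hy : F.sgn (t' + 1) k' <;> grind
  · obtain rfl : t = u := by omega
    obtain rfl : t' = t + 1 := by omega
    exfalso
    cases hx : F.sgn (t + 1) k <;> cases hy : F.sgn t k' <;> grind
  · obtain rfl : t = u := by omega
    obtain rfl : t' = t := by omega
    have : k = k' := by cases hx : F.sgn (t' + 1) k <;> cases hy : F.sgn (t' + 1) k' <;> grind
    rw [this]

lemma flip_shift {u c : ℤ} : F.Flip (u + c * F.T) ↔ F.Flip u := by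
  unfold Flip
  rw [show u + c * F.T + 1 = u + 1 + c * F.T by ring]
  simp only [sgn_shift]
  by_cases hc : Even c
  · simp only [if_pos hc]
  · simp only [if_neg hc, ne_eq, Bool.not_eq_eq_eq_not, Bool.not_not]
    constructor
    · rintro ⟨j, hj⟩
      exact ⟨_, hj⟩
    · rintro ⟨j, hj⟩
      exact ⟨F.r + 1 - j, by rwa [sub_sub_cancel]⟩

/-- A step changes time and height by at most one; a step forward in time leaves a forward wall,
and a step backward in time arrives at a backward wall. -/
lemma step_time {e : ℤ × ℤ} (he : F.Wall e) :
    |(F.step 1 e).1 - e.1| ≤ 1 ∧ |(F.step 1 e).2 - e.2| ≤ 1 ∧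
    ((F.step 1 e).1 = e.1 + 1 → F.sgn e.1 e.2 = false) ∧
    ((F.step 1 e).1 = e.1 - 1 → F.sgn (F.step 1 e).1 (F.step 1 e).2 = true) := by
  obtain ⟨t', ht', htt, h⟩ := F.step_cases (Or.inl rfl) he
  have ha : |t' - e.1| ≤ 1 := by rw [abs_le]; omega
  have hup : t' = e.1 + 1 → F.sgn e.1 e.2 = false := by
    intro h
    rw [ht', eps] at h
    split_ifs at h with hs
    · omega
    · simpa using hs
  have hdown : t' = e.1 - 1 → F.sgn e.1 e.2 = true := by
    intro h
    rw [ht', eps] at h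
    split_ifs at h with hs
    · exact hs
    · omega
  rcases h with h | ⟨-, k', j, hk, -, h | h⟩
  · rw [h.1]
    exact ⟨ha, by simp, hup, fun h' => h.2.2.trans (hdown h')⟩
  · rw [h.1]
    refine ⟨ha, ?_, hup, fun h' => h.2.2.2.trans (hdown h')⟩
    simp only [abs_le]; omega
  · rw [h.1]
    refine ⟨by simp, ?_, fun h' => ?_, fun h' => ?_⟩
    · simp only [abs_le]; omega
    · simp at h'
    · simp only at h'
      exact absurd h' (by omega)

/-- The total vertical variation of a closed curve of walls is at most the number of flips in a
half-period. -/
lemma sum_moves_le (x : F.Dom) :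
    ∑ s ∈ Finset.range (Function.minimalPeriod F.next x),
      |((F.step 1)^[s + 1] x.1).2 - ((F.step 1)^[s] x.1).2|
      ≤ (((Finset.Ico 0 F.T).filter F.Flip).card : ℤ) := by
  set p := Function.minimalPeriod F.next x with hp
  set e : ℕ → ℤ × ℤ := fun s => (F.step 1)^[s] x.1 with he
  have hw : ∀ s, F.Wall (e s) := fun s => F.iterate_wall x.2.1 s
  have hsucc : ∀ s, e (s + 1) = F.step 1 (e s) := fun s => Function.iterate_succ_apply' _ _ _
  have h1 : ∑ s ∈ Finset.range p, |(e (s + 1)).2 - (e s).2|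
      ≤ (((Finset.range p).filter (fun s => (F.step 1 (e s)).2 ≠ (e s).2)).card : ℤ) := by
    rw [Finset.card_filter, Nat.cast_sum]
    refine Finset.sum_le_sum fun s _ => ?_
    rw [hsucc]
    have := (F.step_time (hw s)).2.1
    split_ifs with h
    · simpa using this
    · simp only [ne_eq, not_not] at h
      simp [h]
  refine h1.trans ?_
  rw [Nat.cast_le]
  refine Finset.card_le_card_of_injOn (fun s => F.trans (e s) % F.T) ?_ ?_
  · intro s hs
    simp only [Finset.coe_filter, Finset.mem_range, Set.mem_ofPred_eq] at hs
    simp only [Finset.coe_filter, Finset.mem_Ico, Set.mem_ofPred_eq]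
    refine ⟨⟨Int.emod_nonneg _ F.T_pos.ne', Int.emod_lt_of_pos _ F.T_pos⟩, ?_⟩
    have h2 := F.flip_of_move (hw s) hs.2
    rw [← Int.emod_add_ediv_mul (F.trans (e s)) F.T, flip_shift] at h2
    exact h2
  · intro s hs s' hs' hss
    simp only [Finset.coe_filter, Finset.mem_range, Set.mem_ofPred_eq] at hs hs'
    simp only at hss
    obtain ⟨d, hd⟩ := Int.ModEq.dvd (n := F.T) (a := F.trans (e s')) (b := F.trans (e s)) hss.symm
    have h2 : F.trans (e s) = F.trans (F.shift d (e s')) := by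
      rw [F.trans_shift (hw s')]; linarith
    have h3 : e s = F.shift d (e s') := by
      refine F.move_unique (hw s) (F.wall_shift.2 (hw s')) hs.2 ?_ h2
      rw [F.step_shift (Or.inl rfl) _ (hw s')]
      intro h4
      apply hs'.2
      simp only [shift] at h4
      split_ifs at h4
      · exact h4
      · linarith
    have h4 : F.next^[s] x = F.next^[s'] x := by
      apply Subtype.ext
      rw [next_iterate, next_iterate]
      change F.norm (e s) = F.norm (e s')
      rw [h3, norm_shift]
    exact Function.iterate_injOn_Iio_minimalPeriod (by simpa using hs.1) (by simpa using hs'.1) h4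

/-- There is a path along walls that advances by an odd positive number `w` of half-periods, whose
total vertical variation is at most the number of flips in a half-period, and all of whose steps
forward in time leave walls with the same lower sign `c`. If the curve of `exists_odd_orbit` advances
in time, it serves with `c = false`; if it recedes, it is traversed backwards, with `c = true`. -/
theorem exists_path : ∃ (p : ℕ) (t k : ℕ → ℤ) (c : Bool) (w : ℤ), Odd w ∧ 0 < w ∧
    (∀ s ≤ p, F.Wall (t s, k s)) ∧ (∀ s < p, |t (s + 1) - t s| ≤ 1) ∧
    (∀ s < p, t (s + 1) = t s + 1 → F.sgn (t s) (k s) = c) ∧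
    t p = t 0 + w * F.T ∧ k p = F.r - k 0 ∧
    ∑ s ∈ Finset.range p, |k (s + 1) - k s|
      ≤ (((Finset.Ico 0 F.T).filter F.Flip).card : ℤ) := by
  obtain ⟨x, c, hc, hx⟩ := F.exists_odd_orbit
  have hsum := F.sum_moves_le x
  set p := Function.minimalPeriod F.next x with hp
  set e : ℕ → ℤ × ℤ := fun s => (F.step 1)^[s] x.1 with he
  have hw : ∀ s, F.Wall (e s) := fun s => F.iterate_wall x.2.1 s
  have hsucc : ∀ s, e (s + 1) = F.step 1 (e s) := fun s => Function.iterate_succ_apply' _ _ _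
  have hep : e p = F.shift c (e 0) := hx
  have hnc : ¬ Even c := Int.not_even_iff_odd.2 hc
  have hp1 : (e p).1 = (e 0).1 + c * F.T := by rw [hep]; rfl
  have hp2 : (e p).2 = F.r - (e 0).2 := by rw [hep]; simp [shift, hnc]
  rcases lt_or_gt_of_ne (show c ≠ 0 by rintro rfl; simp at hnc) with hneg | hpos
  · refine ⟨p, fun s => (e (p - s)).1, fun s => (e (p - s)).2, true, -c, hc.neg, by omega,
      fun s _ => hw _, ?_, ?_, ?_, ?_, ?_⟩
    · intro s hs
      have h1 := (F.step_time (hw (p - (s + 1)))).1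
      rw [← hsucc, show p - (s + 1) + 1 = p - s by omega, abs_sub_comm] at h1
      exact h1
    · intro s hs h
      have h1 := (F.step_time (hw (p - (s + 1)))).2.2.2
      rw [← hsucc, show p - (s + 1) + 1 = p - s by omega] at h1
      exact h1 (by simp only at h; omega)
    · simp only [Nat.sub_self, Nat.sub_zero]; rw [hp1]; ring
    · simp only [Nat.sub_self, Nat.sub_zero]; rw [hp2]; ring
    · rw [← Finset.sum_range_reflect] at hsum
      refine le_trans (le_of_eq ?_) hsum
      refine Finset.sum_congr rfl fun s hs => ?_
      rw [Finset.mem_range] at hs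
      rw [abs_sub_comm, show p - 1 - s = p - (s + 1) by omega,
        show p - (s + 1) + 1 = p - s by omega]
  · exact ⟨p, fun s => (e s).1, fun s => (e s).2, false, c, hc, hpos, fun s _ => hw s,
      fun s _ => by simp only [hsucc]; exact (F.step_time (hw s)).1,
      fun s _ h => (F.step_time (hw s)).2.2.1 (by rw [← hsucc]; exact h), hp1, hp2, hsum⟩

end SignField

/-! ### Sets followed along a path -/

lemma abs_sub_le_variation (k : ℕ → ℤ) {s s' : ℕ} (h : s ≤ s') :
    |k s' - k s| ≤ ∑ i ∈ Finset.range s', |k (i + 1) - k i|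
      - ∑ i ∈ Finset.range s, |k (i + 1) - k i| := by
  induction s', h using Nat.le_induction with
  | base => simp
  | succ n hn ih =>
    rw [Finset.sum_range_succ]
    have := abs_sub_le (k (n + 1)) (k n) (k s)
    linarith

/-- A family of finite sets `L t k` is followed along a path from time `t 0` to time `t 0 + τ`. If
at a fixed time the set changes by at most the change of `k`, and if the forward steps of the path
leave `L (t s) (k s)` unchanged as the time increases by one, then the total change is at most the
vertical variation of the path. Only the first arrival at each new time matters: in between, the path
returns to the same time, where the two sets are compared directly, so the backward steps need no
hypothesis. -/
lemma card_symmDiff_path_le {α : Type*} [DecidableEq α] (L : ℤ → ℤ → Finset α) (good : ℤ → ℤ → Prop)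
    (hL : ∀ t k k', good t k → good t k' → ((symmDiff (L t k) (L t k')).card : ℤ) ≤ |k' - k|)
    (p : ℕ) (t k : ℕ → ℤ) (hg : ∀ s ≤ p, good (t s) (k s))
    (ht : ∀ s < p, |t (s + 1) - t s| ≤ 1)
    (hup : ∀ s < p, t (s + 1) = t s + 1 →
      good (t s + 1) (k s) ∧ L (t s + 1) (k s) = L (t s) (k s))
    (τ : ℕ) : ∀ s ≤ p, t s = t 0 + τ →
      ((symmDiff (L (t 0) (k 0)) (L (t s) (k s))).card : ℤ)
        ≤ ∑ i ∈ Finset.range s, |k (i + 1) - k i| := by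
  induction τ with
  | zero =>
    intro s hs hts
    rw [Nat.cast_zero, add_zero] at hts
    have h1 := hL (t 0) (k 0) (k s) (hg 0 (Nat.zero_le _)) (hts ▸ hg s hs)
    have h2 := abs_sub_le_variation k (Nat.zero_le s)
    rw [hts]
    simp only [Finset.range_zero, Finset.sum_empty, sub_zero] at h2
    exact h1.trans h2
  | succ τ ih =>
    intro s hs hts
    push_cast at hts
    have hex : ∃ s2, t 0 + τ + 1 ≤ t s2 := ⟨s, by omega⟩
    have h1 := Nat.find_spec hex
    have h2 : Nat.find hex ≤ s := Nat.find_min' hex (by omega)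
    have h3 : Nat.find hex ≠ 0 := by
      intro h
      rw [h] at h1
      omega
    obtain ⟨s1, hs1⟩ := Nat.exists_eq_succ_of_ne_zero h3
    have h4 : ¬ (t 0 + τ + 1 ≤ t s1) := Nat.find_min hex (by omega)
    rw [hs1] at h1 h2
    have h5 := abs_le.1 (ht s1 (by omega))
    have h6 : t s1 = t 0 + τ := by simp only [Nat.succ_eq_add_one] at h1; omega
    have h7 : t (s1 + 1) = t s1 + 1 := by simp only [Nat.succ_eq_add_one] at h1; omega
    have h8 := ih s1 (by omega) h6
    obtain ⟨h9, h10⟩ := hup s1 (by omega) h7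
    have h11 : t s = t s1 + 1 := by omega
    have h12 := hL _ _ _ h9 (h11 ▸ hg s hs)
    rw [h10] at h12
    have h13 := abs_sub_le_variation k (show s1 ≤ s by omega)
    have h14 : ((symmDiff (L (t 0) (k 0)) (L (t s) (k s))).card : ℤ)
        ≤ (symmDiff (L (t 0) (k 0)) (L (t s1) (k s1))).card
          + (symmDiff (L (t s1) (k s1)) (L (t s) (k s))).card := by
      have := Finset.card_le_card (symmDiff_triangle (L (t 0) (k 0)) (L (t s1) (k s1)) (L (t s) (k s)))
      have h := Finset.card_union_le (symmDiff (L (t 0) (k 0)) (L (t s1) (k s1)))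
        (symmDiff (L (t s1) (k s1)) (L (t s) (k s)))
      exact_mod_cast this.trans h
    rw [h11] at h14 ⊢
    linarith

/-! ### Sweeps -/

/-- A combinatorial rotating sweep of a finite set `S`: at each time `t` the elements are placed
bijectively at the positions `0, …, |S| - 1`, each time step exchanges two neighbours `x` and `y`
and fixes everything else, and the order is reversed after a half-period `T`. -/
structure Sweep {α : Type*} (S : Finset α) where
  T : ℤ
  T_pos : 0 < T
  pos : ℤ → α → ℤ
  bij : ∀ t, Set.BijOn (pos t) S (Set.Ico 0 (S.card : ℤ))
  half : ∀ t, ∀ x ∈ S, pos (t + T) x = S.card - 1 - pos t x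
  swap : ∀ t, ∃ x ∈ S, ∃ y ∈ S, pos t y = pos t x + 1 ∧ pos (t + 1) x = pos t x + 1 ∧
    pos (t + 1) y = pos t x ∧ ∀ z ∈ S, z ≠ x → z ≠ y → pos (t + 1) z = pos t z

namespace Sweep

variable {α : Type*} {S : Finset α} (W : Sweep S)

/-- The first `i` elements at time `t`. -/
noncomputable def pre (t i : ℤ) : Finset α := S.filter (fun x => W.pos t x < i)

/-- The total weight of the first `i` elements at time `t`. -/
noncomputable def P (w : α → ℤ) (t i : ℤ) : ℤ := ∑ x ∈ W.pre t i, w x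

lemma pos_nonneg {x : α} (hx : x ∈ S) (t : ℤ) : 0 ≤ W.pos t x := ((W.bij t).mapsTo hx).1

lemma pos_lt {x : α} (hx : x ∈ S) (t : ℤ) : W.pos t x < S.card := ((W.bij t).mapsTo hx).2

lemma pos_inj {x y : α} (hx : x ∈ S) (hy : y ∈ S) {t : ℤ} (h : W.pos t x = W.pos t y) : x = y :=
  (W.bij t).injOn hx hy h

lemma exists_pos {t i : ℤ} (h0 : 0 ≤ i) (h1 : i < S.card) : ∃ x ∈ S, W.pos t x = i :=
  (W.bij t).surjOn ⟨h0, h1⟩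

lemma pre_succ [DecidableEq α] {t i : ℤ} {x : α} (hx : x ∈ S) (h : W.pos t x = i) :
    W.pre t (i + 1) = insert x (W.pre t i) ∧ x ∉ W.pre t i := by
  constructor
  · ext z
    simp only [pre, Finset.mem_filter, Finset.mem_insert]
    constructor
    · rintro ⟨hz, hzi⟩
      rcases (Int.lt_add_one_iff.1 hzi).lt_or_eq with h1 | h1
      · exact Or.inr ⟨hz, h1⟩
      · exact Or.inl (W.pos_inj hz hx (h1.trans h.symm))
    · rintro (rfl | ⟨hz, hzi⟩)
      · exact ⟨hx, by omega⟩
      · exact ⟨hz, by omega⟩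
  · simp [pre, h]

lemma P_succ (w : α → ℤ) {t i : ℤ} {x : α} (hx : x ∈ S) (h : W.pos t x = i) :
    W.P w t (i + 1) = W.P w t i + w x := by
  obtain ⟨h1, h2⟩ := W.pre_succ hx h
  rw [P, h1, Finset.sum_insert h2, P, add_comm]

lemma pre_of_nonpos {t i : ℤ} (h : i ≤ 0) : W.pre t i = ∅ := by
  refine Finset.filter_eq_empty_iff.2 fun x hx => ?_
  have := W.pos_nonneg hx t
  omega

lemma pre_of_ge {t i : ℤ} (h : (S.card : ℤ) ≤ i) : W.pre t i = S := by
  refine Finset.filter_true_of_mem fun x hx => ?_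
  have := W.pos_lt hx t
  omega

lemma card_pre {t : ℤ} (i : ℕ) (h : i ≤ S.card) : (W.pre t i).card = i := by
  induction i with
  | zero => rw [Nat.cast_zero, W.pre_of_nonpos le_rfl]; rfl
  | succ i ih =>
    obtain ⟨x, hx, hxi⟩ := W.exists_pos (t := t) (i := i) (by omega) (by omega)
    obtain ⟨h1, h2⟩ := W.pre_succ hx hxi
    rw [Nat.cast_succ, h1, Finset.card_insert_of_notMem h2, ih (by omega)]

/-- A step of the sweep changes the initial segments only at one index. -/
lemma swap_pre (t : ℤ) : ∃ x ∈ S, ∃ y ∈ S, W.pos t y = W.pos t x + 1 ∧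
    W.pos (t + 1) x = W.pos t x + 1 ∧ W.pos (t + 1) y = W.pos t x ∧
    ∀ i, i ≠ W.pos t x + 1 → W.pre (t + 1) i = W.pre t i := by
  obtain ⟨x, hx, y, hy, h1, h2, h3, h4⟩ := W.swap t
  refine ⟨x, hx, y, hy, h1, h2, h3, fun i hi => Finset.filter_congr fun z hz => ?_⟩
  by_cases hzx : z = x
  · subst hzx; omega
  by_cases hzy : z = y
  · subst hzy; omega
  rw [h4 z hz hzx hzy]

/-- After a half-period the first `|S| - i` elements are those that were not among the first `i`. -/
lemma P_half (w : α → ℤ) (t i : ℤ) :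
    W.P w (t + W.T) (S.card - i) = ∑ x ∈ S, w x - W.P w t i := by
  rw [eq_sub_iff_add_eq, P, P, ← Finset.sum_union]
  · congr 1
    ext z
    simp only [pre, Finset.mem_union, Finset.mem_filter]
    constructor
    · rintro (h | h) <;> exact h.1
    · intro hz
      rw [W.half t z hz]
      by_cases h : W.pos t z < i
      · exact Or.inr ⟨hz, h⟩
      · exact Or.inl ⟨hz, by omega⟩
  · rw [Finset.disjoint_left]
    intro z h1 h2
    simp only [pre, Finset.mem_filter] at h1 h2
    have := W.half t z h1.1
    omega

lemma pos_odd {x : α} (hx : x ∈ S) (t : ℤ) {w : ℤ} (hw : Odd w) (hpos : 0 < w) :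
    W.pos (t + w * W.T) x = S.card - 1 - W.pos t x := by
  obtain ⟨a, rfl⟩ := hw
  obtain ⟨a, rfl⟩ := Int.eq_ofNat_of_zero_le (show 0 ≤ a by omega)
  induction a with
  | zero => simpa using W.half t x hx
  | succ a ih =>
    have h1 := W.half (t + (2 * (a : ℤ) + 1) * W.T + W.T) x hx
    have h2 := W.half (t + (2 * (a : ℤ) + 1) * W.T) x hx
    rw [show t + (2 * (a : ℤ) + 1) * W.T + W.T + W.T = t + (2 * ((a + 1 : ℕ) : ℤ) + 1) * W.T by
      push_cast; ring] at h1
    have := ih (by omega)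
    omega

/-! ### The sign field of a coloured sweep -/

/-- The weight of a point of `R ∪ B`: `-1` on `R` and `1` elsewhere. -/
noncomputable def wt {α : Type*} [DecidableEq α] (R : Finset α) (x : α) : ℤ := if x ∈ R then -1 else 1

section Colored

variable {α : Type*} [DecidableEq α] {R B : Finset α} (W : Sweep (R ∪ B)) {r δ : ℕ}

lemma wt_cases (R : Finset α) (x : α) : wt R x = 1 ∧ x ∉ R ∨ wt R x = -1 ∧ x ∈ R := by
  unfold wt; split_ifs with h <;> simp [h]

lemma sum_wt (hd : Disjoint R B) (A : Finset α) (hA : A ⊆ R ∪ B) :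
    ∑ x ∈ A, wt R x = ((A ∩ B).card : ℤ) - (A ∩ R).card ∧
      (A.card : ℤ) = (A ∩ B).card + (A ∩ R).card := by
  have hAB : A = (A ∩ B) ∪ (A ∩ R) := by
    ext z
    simp only [Finset.mem_union, Finset.mem_inter]
    have := @hA z
    simp only [Finset.mem_union] at this
    tauto
  have hdis : Disjoint (A ∩ B) (A ∩ R) :=
    (hd.symm.mono Finset.inter_subset_right Finset.inter_subset_right)
  constructor
  · conv_lhs => rw [hAB]
    rw [Finset.sum_union hdis]
    have h1 : ∀ x ∈ A ∩ B, wt R x = 1 := by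
      intro x hx
      rw [wt, if_neg]
      exact fun h => Finset.disjoint_left.1 hd h (Finset.mem_inter.1 hx).2
    have h2 : ∀ x ∈ A ∩ R, wt R x = -1 := by
      intro x hx
      rw [wt, if_pos (Finset.mem_inter.1 hx).2]
    rw [Finset.sum_congr rfl h1, Finset.sum_congr rfl h2]
    simp [sub_eq_add_neg]
  · conv_lhs => rw [hAB]
    rw [Finset.card_union_of_disjoint hdis]
    push_cast; ring

/-- The weight and the size of an initial segment in terms of its colour classes. -/
lemma counts (hd : Disjoint R B) (t : ℤ) {i : ℤ} (h0 : 0 ≤ i) (h1 : i ≤ (R ∪ B).card) :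
    W.P (wt R) t i = ((W.pre t i ∩ B).card : ℤ) - (W.pre t i ∩ R).card ∧
    ((W.pre t i ∩ B).card : ℤ) + (W.pre t i ∩ R).card = i := by
  obtain ⟨h2, h3⟩ := sum_wt hd (W.pre t i) (Finset.filter_subset _ _)
  refine ⟨h2, ?_⟩
  rw [← h3]
  obtain ⟨i, rfl⟩ := Int.eq_ofNat_of_zero_le h0
  rw [W.card_pre i (by omega)]

lemma P_diff (t i : ℤ) : |W.P (wt R) t (i + 1) - W.P (wt R) t i| ≤ 1 := by
  by_cases h0 : 0 ≤ i
  · by_cases h1 : i < (R ∪ B).card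
    · obtain ⟨x, hx, hxi⟩ := W.exists_pos (t := t) h0 h1
      rw [W.P_succ _ hx hxi]
      rcases wt_cases R x with h | h <;> simp [h.1]
    · rw [P, P, W.pre_of_ge (by omega), W.pre_of_ge (by omega)]; simp
  · rw [P, P, W.pre_of_nonpos (by omega), W.pre_of_nonpos (by omega)]; simp

lemma total (hd : Disjoint R B) (hR : R.card = r) (hB : B.card = r + 2 * δ) :
    (∑ x ∈ R ∪ B, wt R x = 2 * δ) ∧ (((R ∪ B).card : ℤ) = 2 * r + 2 * δ) := by
  obtain ⟨h1, h2⟩ := sum_wt hd (R ∪ B) subset_rfl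
  rw [Finset.union_inter_cancel_left, Finset.union_inter_cancel_right, hR, hB] at h1 h2
  push_cast at h1 h2
  exact ⟨by linarith, by linarith⟩

/-- The third clause (parity) is what prevents `P` from being equal to `δ` at the indices
`δ + 2 * j - 1`. -/
lemma P_bounds (hd : Disjoint R B) (hR : R.card = r) (hB : B.card = r + 2 * δ) (t : ℤ) {i : ℤ}
    (h0 : 0 ≤ i) (h1 : i ≤ 2 * r + 2 * δ) :
    W.P (wt R) t i ≤ i ∧ i - 2 * r ≤ W.P (wt R) t i ∧ (W.P (wt R) t i - i) % 2 = 0 := by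
  obtain ⟨-, h3⟩ := total hd hR hB
  obtain ⟨h4, h5⟩ := W.counts hd t h0 (by omega)
  have h6 : (W.pre t i ∩ R).card ≤ r := hR ▸ Finset.card_le_card Finset.inter_subset_right
  omega

/-- The sign of row `j` (with `1 ≤ j ≤ r`) at time `t` records whether the weight of the first
`δ + 2 * j - 1` points exceeds `δ`. That weight is congruent to `δ + 1` modulo `2`, so it is never
equal to `δ`, which makes the field antisymmetric under half-periods. -/
noncomputable def field (W : Sweep (R ∪ B)) (r δ : ℕ) (hd : Disjoint R B) (hR : R.card = r)
    (hB : B.card = r + 2 * δ) : SignField where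
  T := W.T
  r := r
  sgn t j := decide ((r : ℤ) < j ∨ (1 ≤ j ∧ j ≤ r ∧ (δ : ℤ) < W.P (wt R) t (δ + 2 * j - 1)))
  T_pos := W.T_pos
  r_nonneg := by positivity
  low t j hj := by rw [decide_eq_false_iff_not]; omega
  high t j hj := by rw [decide_eq_true_eq]; omega
  anti t j := by
    obtain ⟨h1, h2⟩ := total hd hR hB
    have h3 := W.P_half (wt R) t (δ + 2 * j - 1)
    rw [h1, h2, show (2 * r + 2 * δ - (δ + 2 * j - 1) : ℤ) = δ + 2 * (r + 1 - j) - 1 by ring] at h3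
    rw [← decide_not, decide_eq_decide, h3]
    by_cases hj : 1 ≤ j ∧ j ≤ r
    · have := W.P_bounds hd hR hB t (i := δ + 2 * j - 1) (by omega) (by omega)
      omega
    · omega
  flip_unique t i j hi hj := by
    obtain ⟨x, -, y, -, -, -, -, h⟩ := W.swap_pre t
    have key : ∀ i : ℤ, δ + 2 * i - 1 ≠ W.pos t x + 1 →
        W.P (wt R) (t + 1) (δ + 2 * i - 1) = W.P (wt R) t (δ + 2 * i - 1) := by
      intro i hi
      rw [P, P, h _ hi]
    by_contra hne
    by_cases h1 : δ + 2 * i - 1 = W.pos t x + 1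
    · exact hj (by rw [key j (by omega)])
    · exact hi (by rw [key i h1])

variable (hd : Disjoint R B) (hR : R.card = r) (hB : B.card = r + 2 * δ)

lemma field_sgn (t j : ℤ) : (W.field r δ hd hR hB).sgn t j = true ↔
    ((r : ℤ) < j ∨ (1 ≤ j ∧ j ≤ r ∧ (δ : ℤ) < W.P (wt R) t (δ + 2 * j - 1))) := decide_eq_true_iff

/-- The step from `u` to `u + 1` exchanges two points of different colours that are preceded by
points of total weight `δ`. -/
def BalancedSwap (W : Sweep (R ∪ B)) (δ : ℕ) (u : ℤ) : Prop :=
  ∃ x ∈ R ∪ B, ∃ y ∈ R ∪ B, W.pos u y = W.pos u x + 1 ∧ W.pos (u + 1) x = W.pos u x + 1 ∧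
    W.pos (u + 1) y = W.pos u x ∧ wt R x ≠ wt R y ∧ W.P (wt R) u (W.pos u x) = δ

/-- A weight `P u i` with `i = δ + 2 * j - 1` jumps across `δ` only if the two exchanged points
have different colours and the weight before them is exactly `δ`. -/
lemma balancedSwap_of_flip {u : ℤ} (h : (W.field r δ hd hR hB).Flip u) :
    W.BalancedSwap δ u := by
  obtain ⟨j, hj⟩ := h
  obtain ⟨x, hx, y, hy, h1, h2, h3, h4⟩ := W.swap_pre u
  refine ⟨x, hx, y, hy, h1, h2, h3, ?_⟩
  rw [Ne, Bool.eq_iff_iff, field_sgn, field_sgn] at hj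
  have h5 : δ + 2 * j - 1 = W.pos u x + 1 := by
    by_contra hc
    rw [P, P, h4 _ hc] at hj
    exact hj Iff.rfl
  have h6 := W.P_succ (wt R) hx rfl (t := u)
  have h7 := W.P_succ (wt R) hy h3 (t := u + 1)
  have h8 : W.P (wt R) (u + 1) (W.pos u x) = W.P (wt R) u (W.pos u x) := by
    rw [P, P, h4 _ (by omega)]
  have hjr : 1 ≤ j ∧ j ≤ r := by
    by_contra hc
    apply hj
    omega
  have h9 := W.P_bounds hd hR hB u (i := δ + 2 * j - 1) (by omega) (by omega)
  have h10 := W.P_bounds hd hR hB (u + 1) (i := δ + 2 * j - 1) (by omega) (by omega)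
  rw [h5] at hj h9 h10
  rcases wt_cases R x with hx | hx <;> rcases wt_cases R y with hy | hy <;>
    rw [hx.1] at h6 ⊢ <;> rw [hy.1] at h7 ⊢ <;> constructor <;> omega

/-- At a wall `(t, k)` the first `δ + 2 * k` points have weight `δ`, and the two points next to the
cut are both blue at a forward wall and both red at a backward wall. -/
lemma wall_props {t k : ℤ} (h : (W.field r δ hd hR hB).Wall (t, k)) :
    0 ≤ k ∧ k ≤ r ∧ W.P (wt R) t (δ + 2 * k) = δ ∧
    ∀ x ∈ R ∪ B, ∀ y ∈ R ∪ B, W.pos t x + 1 = δ + 2 * k → W.pos t y = δ + 2 * k →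
      ((W.field r δ hd hR hB).sgn t k = false → x ∉ R ∧ y ∉ R) ∧
      ((W.field r δ hd hR hB).sgn t k = true → x ∈ R ∧ y ∈ R) := by
  obtain ⟨hk0, hkr⟩ := (W.field r δ hd hR hB).wall_range h
  change 0 ≤ k at hk0
  change k ≤ r at hkr
  unfold SignField.Wall at h
  rw [Ne, Bool.eq_iff_iff, field_sgn, field_sgn] at h
  simp only at h
  have hfalse : (W.field r δ hd hR hB).sgn t k = false ↔ ¬ (W.field r δ hd hR hB).sgn t k = true := by
    simp
  rw [hfalse, field_sgn]
  obtain ⟨m, hm⟩ : ∃ m : ℤ, m = δ + 2 * k := ⟨_, rfl⟩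
  rw [show (δ : ℤ) + 2 * (k + 1) - 1 = m + 1 by omega, show (δ : ℤ) + 2 * k - 1 = m - 1 by omega] at h
  rw [show (δ : ℤ) + 2 * k - 1 = m - 1 by omega, ← hm]
  have d1 := abs_le.1 (W.P_diff t (m - 1))
  have d2 := abs_le.1 (W.P_diff t m)
  rw [sub_add_cancel] at d1
  have b0 := W.P_bounds hd hR hB t (i := m) (by omega) (by omega)
  have b1 : 0 ≤ m - 1 → _ := fun h0 => W.P_bounds hd hR hB t (i := m - 1) h0 (by omega)
  have b2 : m + 1 ≤ 2 * r + 2 * δ → _ := fun h0 => W.P_bounds hd hR hB t (i := m + 1) (by omega) h0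
  have hn := (total hd hR hB).2
  refine ⟨hk0, hkr, by omega, ?_⟩
  intro x hx y hy hxm hym
  have h6 := W.P_succ (wt R) hx (show W.pos t x = m - 1 by omega)
  have h7 := W.P_succ (wt R) hy hym
  rw [sub_add_cancel] at h6
  have := W.pos_nonneg hx t
  have := W.pos_lt hy t
  rcases wt_cases R x with hx | hx <;> rcases wt_cases R y with hy | hy <;>
    rw [hx.1] at h6 <;> rw [hy.1] at h7 <;> simp only [hx.2, hy.2, not_true, not_false_eq_true, and_true, true_and, implies_true, imp_false, and_false] <;> omega

end Colored

/-! ### Counting balanced swaps -/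

section Count

variable {α : Type*} [DecidableEq α] {R B : Finset α} (W : Sweep (R ∪ B)) {r δ : ℕ}

/-- The points of the colour class `C` among the first `δ + 2 * k` points at time `t`. -/
noncomputable def seg (C : Finset α) (δ : ℕ) (t k : ℤ) : Finset α := W.pre t (δ + 2 * k) ∩ C

/-- Between two cuts of weight `δ` at the same time there are as many red as blue points, hence
`|k' - k|` of each colour. -/
lemma card_symmDiff_seg (hd : Disjoint R B) (hR : R.card = r) (hB : B.card = r + 2 * δ)
    {C : Finset α} (hC : C = R ∨ C = B) {t k k' : ℤ}
    (h : 0 ≤ k ∧ k ≤ r ∧ W.P (wt R) t (δ + 2 * k) = δ)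
    (h' : 0 ≤ k' ∧ k' ≤ r ∧ W.P (wt R) t (δ + 2 * k') = δ) :
    ((symmDiff (W.seg C δ t k) (W.seg C δ t k')).card : ℤ) ≤ |k' - k| := by
  wlog hkk : k ≤ k' generalizing k k'
  · rw [symmDiff_comm, abs_sub_comm]
    exact this h' h (by omega)
  have hsub : W.seg C δ t k ⊆ W.seg C δ t k' := by
    intro z
    simp only [seg, pre, Finset.mem_inter, Finset.mem_filter]
    rintro ⟨⟨h1, h2⟩, h3⟩
    exact ⟨⟨h1, by omega⟩, h3⟩
  obtain ⟨-, hn⟩ := total hd hR hB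
  have h1 := W.counts hd t (i := δ + 2 * k) (by omega) (by omega)
  have h2 := W.counts hd t (i := δ + 2 * k') (by omega) (by omega)
  have h3 : symmDiff (W.seg C δ t k) (W.seg C δ t k') = W.seg C δ t k' \ W.seg C δ t k := by
    rw [symmDiff_def, Finset.sup_eq_union, Finset.sdiff_eq_empty_iff_subset.2 hsub,
      Finset.empty_union]
  have h4 : ((W.seg C δ t k').card : ℤ) - (W.seg C δ t k).card = k' - k := by
    rcases hC with rfl | rfl <;> unfold seg <;> omega
  rw [h3, Finset.card_sdiff_of_subset hsub, Nat.cast_sub (Finset.card_le_card hsub), h4]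
  exact le_abs_self _

/-- The two points next to the cut at a wall have the colour other than `C`, so advancing the time
by one changes neither the weight before the cut nor the points of `C` before it. -/
lemma seg_step (hd : Disjoint R B) (hR : R.card = r) (hB : B.card = r + 2 * δ) {t k : ℤ}
    (h : (W.field r δ hd hR hB).Wall (t, k)) {C : Finset α}
    (hC : C = if (W.field r δ hd hR hB).sgn t k = true then B else R) :
    W.P (wt R) (t + 1) (δ + 2 * k) = δ ∧ W.seg C δ (t + 1) k = W.seg C δ t k := by
  obtain ⟨hk0, hkr, hP, hxy⟩ := W.wall_props hd hR hB h
  obtain ⟨x, hx, y, hy, h1, h2, h3, h4⟩ := W.swap_pre t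
  by_cases hm : δ + 2 * k = W.pos t x + 1
  · obtain ⟨hU, hD⟩ := hxy x hx y hy (by omega) (by omega)
    have hcol : x ∉ C ∧ y ∉ C ∧ wt R x = wt R y := by
      unfold wt
      by_cases hs : (W.field r δ hd hR hB).sgn t k = true
      · obtain ⟨h5, h6⟩ := hD hs
        rw [hC, if_pos hs]
        exact ⟨Finset.disjoint_left.1 hd h5, Finset.disjoint_left.1 hd h6, by simp [h5, h6]⟩
      · obtain ⟨h5, h6⟩ := hU (by simpa using hs)
        rw [hC, if_neg hs]
        exact ⟨h5, h6, by simp [h5, h6]⟩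
    have h5 := h4 (W.pos t x) (by omega)
    have h6 := W.P_succ (wt R) hx rfl (t := t)
    have h7 := W.P_succ (wt R) hy h3 (t := t + 1)
    rw [hm] at hP
    constructor
    · rw [hm, h7, ← hcol.2.2, P, h5, ← P, ← h6, hP]
    · rw [seg, seg, hm, (W.pre_succ hx rfl).1, (W.pre_succ hy h3).1, h5,
        Finset.insert_inter_of_notMem hcol.1, Finset.insert_inter_of_notMem hcol.2.1]
  · rw [P, seg, seg, h4 _ hm]
    exact ⟨hP, rfl⟩

/-- Along the path of `SignField.exists_path` the set `seg` becomes its complement in `C`, because an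
odd number of half-periods reverses the order. Hence `|C|` is at most the vertical variation of the
path, which is at most the number of flips, and every flip is a balanced swap. -/
theorem card_le_balancedSwaps (hd : Disjoint R B) (hR : R.card = r) (hB : B.card = r + 2 * δ) :
    r ≤ ((Finset.Ico 0 W.T).filter (W.BalancedSwap δ)).card := by
  obtain ⟨p, t, k, c, w, hw, hw0, hwall, ht, hc, htp, hkp, hsum⟩ :=
    (W.field r δ hd hR hB).exists_path
  set F := W.field r δ hd hR hB with hF
  change t p = t 0 + w * W.T at htp
  change k p = r - k 0 at hkp
  change _ ≤ (((Finset.Ico 0 W.T).filter F.Flip).card : ℤ) at hsum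
  set C : Finset α := if c = true then B else R with hCdef
  have hC : C = R ∨ C = B := by rw [hCdef]; split_ifs <;> simp
  have hCr : r ≤ C.card := by rcases hC with h | h <;> rw [h] <;> omega
  have hCS : C ⊆ R ∪ B := by
    rcases hC with h | h <;> rw [h]
    · exact Finset.subset_union_left
    · exact Finset.subset_union_right
  obtain ⟨τ, hτ⟩ := Int.eq_ofNat_of_zero_le (mul_nonneg hw0.le W.T_pos.le)
  have h1 := card_symmDiff_path_le (W.seg C δ)
    (fun t k => 0 ≤ k ∧ k ≤ r ∧ W.P (wt R) t (δ + 2 * k) = δ)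
    (fun t k k' h h' => W.card_symmDiff_seg hd hR hB hC h h') p t k
    (fun s hs => by
      obtain ⟨h1, h2, h3, -⟩ := W.wall_props hd hR hB (hwall s hs)
      exact ⟨h1, h2, h3⟩) ht
    (fun s hs hts => by
      obtain ⟨h1, h2, -, -⟩ := W.wall_props hd hR hB (hwall s hs.le)
      obtain ⟨h3, h4⟩ := W.seg_step hd hR hB (hwall s hs.le) (C := C) (by
        rw [hCdef, ← hc s hs hts])
      exact ⟨⟨h1, h2, h3⟩, h4⟩) τ p le_rfl (by rw [htp, hτ])
  -- At time `t p` the order is reversed and the cut has moved from `δ + 2 * k 0` to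
  -- `δ + 2 * (r - k 0)`, so the points before the final cut are those after the initial one.
  have h2 : symmDiff (W.seg C δ (t 0) (k 0)) (W.seg C δ (t p) (k p)) = C := by
    ext z
    simp only [Finset.mem_symmDiff, seg, pre, Finset.mem_inter, Finset.mem_filter]
    by_cases hz : z ∈ C
    · have h3 := W.pos_odd (hCS hz) (t 0) hw hw0
      have hn := (total hd hR hB).2
      rw [htp, hkp, h3, hn]
      simp only [hz, hCS hz, true_and, and_true, iff_true]
      omega
    · simp [hz]
  rw [h2] at h1
  have h3 : ((Finset.Ico 0 W.T).filter F.Flip).card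
      ≤ ((Finset.Ico 0 W.T).filter (W.BalancedSwap δ)).card :=
    Finset.card_le_card (Finset.monotone_filter_right _
      (fun u _ hu => W.balancedSwap_of_flip hd hR hB hu))
  omega

end Count

end Sweep

/-! ### Sweeps from rankings of pairs -/

/-- The data that determine a sweep of `S`: a strict total order `lt` (the order at time `0`) and a
symmetric function `rk` numbering the pairs of distinct elements by `0, …, T - 1`, which is the time at
which a pair is exchanged. The condition `triple` says that for `a < b < c` the rank of the pair
`a, c` lies between those of `a, b` and `b, c`. -/
structure Ranking {α : Type*} (S : Finset α) where
  lt : α → α → Prop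
  lt_irrefl : ∀ x, ¬ lt x x
  lt_trans : ∀ x y z, lt x y → lt y z → lt x z
  lt_total : ∀ x y, x ≠ y → lt x y ∨ lt y x
  T : ℤ
  T_pos : 0 < T
  rk : α → α → ℤ
  symm : ∀ x y, rk x y = rk y x
  range : ∀ x ∈ S, ∀ y ∈ S, x ≠ y → 0 ≤ rk x y ∧ rk x y < T
  inj : ∀ x ∈ S, ∀ y ∈ S, ∀ x' ∈ S, ∀ y' ∈ S, lt x y → lt x' y' → rk x y = rk x' y' →
    x = x' ∧ y = y'
  surj : ∀ u, 0 ≤ u → u < T → ∃ x ∈ S, ∃ y ∈ S, lt x y ∧ rk x y = u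
  triple : ∀ a ∈ S, ∀ b ∈ S, ∀ c ∈ S, lt a b → lt b c →
    (rk a b < rk a c ∧ rk a c < rk b c) ∨ (rk b c < rk a c ∧ rk a c < rk a b)

namespace Ranking

variable {α : Type*} {S : Finset α} (K : Ranking S)

/-- The pair `x, y` is in the reversed order at time `t`. For `0 ≤ t ≤ T` this means
`rk x y < t`; the formula extends it so that it is negated by every half-period. -/
def Sw (t : ℤ) (x y : α) : Prop := Even ((t - 1 - K.rk x y) / K.T)

lemma sw_symm (t : ℤ) (x y : α) : K.Sw t x y ↔ K.Sw t y x := by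
  rw [Sw, Sw, K.symm]

/-- The order at time `t`. -/
def prec (t : ℤ) (x y : α) : Prop := (K.lt x y ∧ ¬ K.Sw t x y) ∨ (K.lt y x ∧ K.Sw t x y)

lemma prec_irrefl (t : ℤ) (x : α) : ¬ K.prec t x x := by
  rintro (h | h) <;> exact K.lt_irrefl _ h.1

lemma lt_asymm {x y : α} (h : K.lt x y) : ¬ K.lt y x :=
  fun h' => K.lt_irrefl _ (K.lt_trans _ _ _ h h')

lemma prec_total (t : ℤ) {x y : α} (h : x ≠ y) : K.prec t x y ∨ K.prec t y x := by
  have := K.lt_total x y h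
  have := K.sw_symm t x y
  unfold prec
  tauto

lemma prec_asymm {t : ℤ} {x y : α} (h : K.prec t x y) : ¬ K.prec t y x := by
  have := @lt_asymm _ _ K x y
  have := K.sw_symm t x y
  unfold prec at *
  tauto

/-- By `triple`, the pair `a, c` always agrees with one of the pairs `a, b` and `b, c`; this is what
makes `prec` transitive. -/
lemma sw_triple (t : ℤ) {a b c : α} (ha : a ∈ S) (hb : b ∈ S) (hc : c ∈ S) (hab : K.lt a b)
    (hbc : K.lt b c) : (K.Sw t a c ↔ K.Sw t a b) ∨ (K.Sw t a c ↔ K.Sw t b c) := by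
  have hne : ∀ {x y}, K.lt x y → x ≠ y := by
    rintro x y h rfl
    exact K.lt_irrefl _ h
  have h1 := K.range a ha b hb (hne hab)
  have h2 := K.range b hb c hc (hne hbc)
  have h3 := K.range a ha c hc (hne (K.lt_trans _ _ _ hab hbc))
  have mono : ∀ i j : ℤ, i < j → j < i + K.T →
      (t - 1 - j) / K.T ≤ (t - 1 - i) / K.T ∧ (t - 1 - i) / K.T ≤ (t - 1 - j) / K.T + 1 := by
    intro i j hij hji
    refine ⟨Int.ediv_le_ediv K.T_pos (by omega), ?_⟩
    have h := Int.add_mul_ediv_right (t - 1 - j) 1 K.T_pos.ne'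
    rw [← h]
    exact Int.ediv_le_ediv K.T_pos (by omega)
  unfold Sw
  rcases K.triple a ha b hb c hc hab hbc with ⟨h4, h5⟩ | ⟨h4, h5⟩
  · have m1 := mono _ _ h4 (by omega)
    have m2 := mono _ _ h5 (by omega)
    have m3 := mono _ _ (h4.trans h5) (by omega)
    have : (t - 1 - K.rk a c) / K.T = (t - 1 - K.rk a b) / K.T ∨
      (t - 1 - K.rk a c) / K.T = (t - 1 - K.rk b c) / K.T := by omega
    rcases this with h | h <;> simp [h]
  · have m1 := mono _ _ h4 (by omega)
    have m2 := mono _ _ h5 (by omega)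
    have m3 := mono _ _ (h4.trans h5) (by omega)
    have : (t - 1 - K.rk a c) / K.T = (t - 1 - K.rk a b) / K.T ∨
      (t - 1 - K.rk a c) / K.T = (t - 1 - K.rk b c) / K.T := by omega
    rcases this with h | h <;> simp [h]

lemma prec_trans {t : ℤ} {x y z : α} (hx : x ∈ S) (hy : y ∈ S) (hz : z ∈ S)
    (h1 : K.prec t x y) (h2 : K.prec t y z) : K.prec t x z := by
  have hxz : x ≠ z := by
    rintro rfl
    exact K.prec_asymm h1 h2
  have tot := K.lt_total x z hxz
  have sxy := K.sw_symm t x y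
  have syz := K.sw_symm t y z
  have sxz := K.sw_symm t x z
  have q1 := @sw_triple _ _ K t x y z hx hy hz
  have q2 := @sw_triple _ _ K t x z y hx hz hy
  have q3 := @sw_triple _ _ K t y x z hy hx hz
  have q4 := @sw_triple _ _ K t y z x hy hz hx
  have q5 := @sw_triple _ _ K t z x y hz hx hy
  have q6 := @sw_triple _ _ K t z y x hz hy hx
  have a := @lt_asymm _ _ K x z
  have t1 := K.lt_trans x y z
  have t2 := K.lt_trans z y x
  unfold prec at *
  rcases h1 with ⟨l1, s1⟩ | ⟨l1, s1⟩ <;> rcases h2 with ⟨l2, s2⟩ | ⟨l2, s2⟩ <;>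
    rcases tot with l3 | l3 <;> grind

/-- The position of `x` at time `t`: the number of elements that precede it. -/
noncomputable def pos (t : ℤ) (x : α) : ℤ := ((S.filter (fun y => K.prec t y x)).card : ℤ)

lemma pos_lt_of_prec {t : ℤ} {x y : α} (hx : x ∈ S) (hy : y ∈ S) (h : K.prec t x y) :
    K.pos t x < K.pos t y := by
  unfold pos
  rw [Nat.cast_lt]
  apply Finset.card_lt_card
  rw [Finset.ssubset_iff_of_subset]
  · exact ⟨x, by simp [hx, h], by simp [K.prec_irrefl]⟩
  · intro z hz
    simp only [Finset.mem_filter] at hz ⊢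
    exact ⟨hz.1, K.prec_trans hz.1 hx hy hz.2 h⟩

lemma pos_lt_iff {t : ℤ} {x y : α} (hx : x ∈ S) (hy : y ∈ S) :
    K.pos t x < K.pos t y ↔ K.prec t x y := by
  refine ⟨fun h => ?_, K.pos_lt_of_prec hx hy⟩
  have hne : x ≠ y := by rintro rfl; exact absurd h (by omega)
  rcases K.prec_total t hne with h' | h'
  · exact h'
  · exact absurd (K.pos_lt_of_prec hy hx h') (by omega)

lemma pos_inj {t : ℤ} {x y : α} (hx : x ∈ S) (hy : y ∈ S) (h : K.pos t x = K.pos t y) : x = y := by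
  by_contra hne
  rcases K.prec_total t hne with h' | h'
  · have := K.pos_lt_of_prec hx hy h'; omega
  · have := K.pos_lt_of_prec hy hx h'; omega

lemma pos_bij (t : ℤ) : Set.BijOn (K.pos t) S (Set.Ico 0 (S.card : ℤ)) := by
  have hmaps : ∀ x ∈ S, K.pos t x ∈ Finset.Ico 0 (S.card : ℤ) := by
    intro x hx
    rw [Finset.mem_Ico]
    refine ⟨by unfold pos; positivity, ?_⟩
    unfold pos
    rw [Nat.cast_lt]
    apply Finset.card_lt_card
    rw [Finset.ssubset_iff_of_subset (Finset.filter_subset _ _)]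
    exact ⟨x, hx, by simp [K.prec_irrefl]⟩
  have hinj : Set.InjOn (K.pos t) S := fun x hx y hy h => K.pos_inj hx hy h
  refine ⟨fun x hx => by simpa using hmaps x hx, hinj, ?_⟩
  have := Finset.surjOn_of_injOn_of_card_le (K.pos t) (s := S) (t := Finset.Ico 0 (S.card : ℤ))
    hmaps hinj (by simp)
  simpa using this

lemma sw_half (t : ℤ) (x y : α) : K.Sw (t + K.T) x y ↔ ¬ K.Sw t x y := by
  unfold Sw
  rw [show t + K.T - 1 - K.rk x y = t - 1 - K.rk x y + 1 * K.T by ring,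
    Int.add_mul_ediv_right _ _ K.T_pos.ne', Int.even_add_one]

lemma prec_half (t : ℤ) (x y : α) : K.prec (t + K.T) x y ↔ K.prec t y x := by
  have := K.sw_half t x y
  have := K.sw_symm t x y
  unfold prec
  tauto

lemma pos_half (t : ℤ) {x : α} (hx : x ∈ S) : K.pos (t + K.T) x = S.card - 1 - K.pos t x := by
  unfold pos
  simp only [prec_half]
  have h1 : S = insert x (S.filter (fun y => K.prec t x y) ∪ S.filter (fun y => K.prec t y x)) := by
    ext z
    simp only [Finset.mem_insert, Finset.mem_union, Finset.mem_filter]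
    constructor
    · intro hz
      by_cases h : z = x
      · exact Or.inl h
      · rcases K.prec_total t h with h' | h'
        · exact Or.inr (Or.inr ⟨hz, h'⟩)
        · exact Or.inr (Or.inl ⟨hz, h'⟩)
    · rintro (rfl | h | h)
      · exact hx
      · exact h.1
      · exact h.1
  have h2 : S.card = (S.filter (fun y => K.prec t x y)).card
      + (S.filter (fun y => K.prec t y x)).card + 1 := by
    conv_lhs => rw [h1]
    rw [Finset.card_insert_of_notMem (by simp [K.prec_irrefl]), Finset.card_union_of_disjoint]
    rw [Finset.disjoint_filter]
    exact fun z _ h => K.prec_asymm h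
  omega

/-- A pair is exchanged between `t` and `t + 1` exactly when its rank is congruent to `t`. -/
lemma sw_succ (t : ℤ) (x y : α) :
    (K.Sw (t + 1) x y ↔ K.Sw t x y) ↔ ¬ K.T ∣ t - K.rk x y := by
  unfold Sw
  have hT := K.T_pos
  obtain ⟨s, hs⟩ : ∃ s, s = t - K.rk x y := ⟨_, rfl⟩
  rw [show t + 1 - 1 - K.rk x y = s by omega, show t - 1 - K.rk x y = s - 1 by omega, ← hs]
  by_cases h : K.T ∣ s
  · obtain ⟨a, rfl⟩ := h
    have h1 : (K.T * a - 1) / K.T = a - 1 := by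
      rw [Int.ediv_eq_iff_of_pos hT]
      constructor <;> nlinarith
    rw [Int.mul_ediv_cancel_left _ hT.ne', h1, Int.even_sub_one]
    simp only [dvd_mul_right, not_true_eq_false, iff_false]
    tauto
  · have h1 : (s - 1) / K.T = s / K.T := by
      have h2 := Int.emod_add_mul_ediv s K.T
      have h3 := Int.emod_nonneg s hT.ne'
      have h4 := Int.emod_lt_of_pos s hT
      have h5 : s % K.T ≠ 0 := fun h' => h (Int.dvd_of_emod_eq_zero h')
      rw [Int.ediv_eq_iff_of_pos hT]
      have : 0 < s % K.T := by omega
      constructor <;> nlinarith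
    rw [h1]
    simp [h]

/-- The two points whose rank is congruent to `t` are exchanged at step `t`; every other pair
keeps its order. -/
lemma prec_succ (t : ℤ) : ∃ x ∈ S, ∃ y ∈ S, K.prec t x y ∧ K.prec (t + 1) y x ∧
    ∀ u ∈ S, ∀ v ∈ S, ¬ (u = x ∧ v = y) → ¬ (u = y ∧ v = x) →
      (K.prec (t + 1) u v ↔ K.prec t u v) := by
  have hT := K.T_pos
  obtain ⟨x, hx, y, hy, hlt, hrk⟩ := K.surj (t % K.T) (Int.emod_nonneg _ hT.ne')
    (Int.emod_lt_of_pos _ hT)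
  have hdvd : K.T ∣ t - K.rk x y := by rw [hrk]; exact Int.dvd_self_sub_emod
  have hxy : ¬ (K.Sw (t + 1) x y ↔ K.Sw t x y) := by rw [sw_succ]; simpa using hdvd
  have hoth : ∀ u ∈ S, ∀ v ∈ S, ¬ (u = x ∧ v = y) → ¬ (u = y ∧ v = x) →
      (K.prec (t + 1) u v ↔ K.prec t u v) := by
    intro u hu v hv h1 h2
    by_cases huv : u = v
    · subst huv
      simp [K.prec_irrefl]
    have h3 : K.Sw (t + 1) u v ↔ K.Sw t u v := by
      rw [sw_succ]
      intro h
      have h4 := K.range u hu v hv huv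
      have h5 : K.rk u v = K.rk x y := by
        rw [hrk, ← Int.emod_eq_of_lt h4.1 h4.2]
        exact (Int.emod_eq_emod_iff_emod_sub_eq_zero.2 (Int.emod_eq_zero_of_dvd h)).symm
      rcases K.lt_total u v huv with h6 | h6
      · exact h1 (K.inj u hu v hv x hx y hy h6 hlt h5)
      · have := K.inj v hv u hu x hx y hy h6 hlt (by rw [K.symm, h5])
        exact h2 ⟨this.2, this.1⟩
    simp only [prec, h3]
  have a := K.lt_asymm hlt
  have s1 := K.sw_symm t x y
  have s2 := K.sw_symm (t + 1) x y
  by_cases hs : K.Sw t x y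
  · refine ⟨y, hy, x, hx, ?_, ?_, fun u hu v hv h1 h2 => hoth u hu v hv h2 h1⟩ <;> unfold prec <;> tauto
  · refine ⟨x, hx, y, hy, ?_, ?_, hoth⟩ <;> unfold prec <;> tauto

/-- The sweep defined by a ranking. -/
noncomputable def sweep : Sweep S where
  T := K.T
  T_pos := K.T_pos
  pos := K.pos
  bij := K.pos_bij
  half t x hx := K.pos_half t hx
  swap t := by
    obtain ⟨x, hx, y, hy, h1, h2, h3⟩ := K.prec_succ t
    have hne : x ≠ y := by rintro rfl; exact K.prec_irrefl _ _ h1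
    -- The exchanged points are neighbours: a point strictly between them would make the order at
    -- time `t + 1` cyclic.
    have hadj : ∀ z ∈ S, z ≠ x → (K.prec t z y ↔ K.prec t z x) := by
      intro z hz hzx
      refine ⟨fun h => ?_, fun h => K.prec_trans hz hx hy h h1⟩
      by_contra hc
      have h4 : K.prec t x z := (K.prec_total t hzx).resolve_left hc
      have hzy : z ≠ y := by rintro rfl; exact K.prec_irrefl _ _ h
      have h5 := (h3 x hx z hz (by tauto) (by tauto)).2 h4
      have h6 := (h3 z hz y hy (by tauto) (by tauto)).2 h
      exact K.prec_asymm h2 (K.prec_trans hx hz hy h5 h6)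
    refine ⟨x, hx, y, hy, ?_, ?_, ?_, ?_⟩
    · have : S.filter (fun z => K.prec t z y) = insert x (S.filter (fun z => K.prec t z x)) := by
        ext z
        simp only [Finset.mem_filter, Finset.mem_insert]
        by_cases hz : z = x
        · subst hz; simp [hx, h1]
        · simp only [hz, false_or]
          exact and_congr_right fun h => hadj z h hz
      rw [pos, pos, this, Finset.card_insert_of_notMem (by simp [K.prec_irrefl])]
      push_cast; ring
    · have : S.filter (fun z => K.prec (t + 1) z x) = insert y (S.filter (fun z => K.prec t z x)) := by
        ext z
        simp only [Finset.mem_filter, Finset.mem_insert]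
        by_cases hz : z = y
        · subst hz; simp [hy, h2]
        · simp only [hz, false_or]
          exact and_congr_right fun h => h3 z h x hx (by tauto) (by tauto)
      rw [pos, pos, this, Finset.card_insert_of_notMem (by simp [K.prec_asymm h1])]
      push_cast; ring
    · have : S.filter (fun z => K.prec (t + 1) z y) = S.filter (fun z => K.prec t z x) := by
        refine Finset.filter_congr fun z hz => ?_
        by_cases hzx : z = x
        · subst hzx; simp [K.prec_irrefl, K.prec_asymm h2]
        · rw [h3 z hz y hy (by tauto) (by tauto), hadj z hz hzx]
      rw [pos, pos, this]
    · intro z hz hzx hzy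
      have : S.filter (fun v => K.prec (t + 1) v z) = S.filter (fun v => K.prec t v z) :=
        Finset.filter_congr fun v hv => h3 v hv z hz (by tauto) (by tauto)
      rw [pos, pos, this]

end Ranking

/-! ### The ranking of point pairs by slope -/

/-- The elements of a finite set can be numbered compatibly with a key, ties being broken
arbitrarily. -/
lemma exists_rank {β γ : Type*} [LinearOrder γ] (key : β → γ) (Q : Finset β) :
    ∃ ρ : β → ℤ, (∀ q ∈ Q, 0 ≤ ρ q ∧ ρ q < Q.card) ∧ Set.InjOn ρ Q ∧
      ∀ q ∈ Q, ∀ q' ∈ Q, key q < key q' → ρ q < ρ q' := by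
  induction Q using Finset.induction_on_max_value key with
  | empty => exact ⟨fun _ => 0, by simp, by simp, by simp⟩
  | insert a s ha hmax ih =>
    obtain ⟨ρ, h1, h2, h3⟩ := ih
    have hv : ∀ q ∈ s, Function.update ρ a (s.card : ℤ) q = ρ q := by
      intro q hq
      rw [Function.update_of_ne]
      rintro rfl
      exact ha hq
    have hval : Function.update ρ a (s.card : ℤ) a = s.card := Function.update_self _ _ _
    refine ⟨Function.update ρ a s.card, ?_, ?_, ?_⟩
    · intro q hq
      rw [Finset.card_insert_of_notMem ha]
      push_cast
      rcases Finset.mem_insert.1 hq with rfl | hq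
      · rw [hval]; omega
      · rw [hv q hq]; have := h1 q hq; omega
    · intro q hq q' hq' h
      rcases Finset.mem_insert.1 hq with rfl | hqs <;>
        rcases Finset.mem_insert.1 hq' with rfl | hqs'
      · rfl
      · rw [hval, hv q' hqs'] at h; have := h1 q' hqs'; omega
      · rw [hval, hv q hqs] at h; have := h1 q hqs; omega
      · rw [hv q hqs, hv q' hqs'] at h; exact h2 hqs hqs' h
    · intro q hq q' hq' h
      rcases Finset.mem_insert.1 hq with rfl | hqs <;>
        rcases Finset.mem_insert.1 hq' with rfl | hqs'
      · exact absurd h (lt_irrefl _)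
      · exact absurd h (not_lt.2 (hmax q' hqs'))
      · rw [hval, hv q hqs]; exact (h1 q hqs).2
      · rw [hv q hqs, hv q' hqs']; exact h3 q hqs q' hqs' h

/-- The lexicographic order of the plane, which is the order of a point set in a direction turned
slightly away from the horizontal. -/
def lexLt (a b : ℝ × ℝ) : Prop := a.1 < b.1 ∨ (a.1 = b.1 ∧ a.2 < b.2)

/-- The slope of the line through two points, `⊤` for vertical lines. -/
noncomputable def slopeKey (q : (ℝ × ℝ) × (ℝ × ℝ)) : WithTop ℝ :=
  if q.1.1 = q.2.1 then ⊤ else (((q.2.2 - q.1.2) / (q.2.1 - q.1.1) : ℝ) : WithTop ℝ)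

/-- For lexicographically increasing pairs, `ab` is less steep than `cd` if the determinant of
`b - a` and `d - c` is positive. -/
lemma slopeKey_lt {a b c d : ℝ × ℝ} (h1 : lexLt a b) (h2 : lexLt c d)
    (h : 0 < (b.1 - a.1) * (d.2 - c.2) - (b.2 - a.2) * (d.1 - c.1)) :
    slopeKey (a, b) < slopeKey (c, d) := by
  unfold slopeKey
  simp only
  rcases h1 with h1 | ⟨h1, h1'⟩
  · rw [if_neg h1.ne]
    rcases h2 with h2 | ⟨h2, h2'⟩
    · rw [if_neg h2.ne, WithTop.coe_lt_coe, div_lt_div_iff₀ (by linarith) (by linarith)]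
      linarith
    · rw [if_pos h2]; exact WithTop.coe_lt_top _
  · exfalso
    have h3 : c.1 ≤ d.1 := by
      rcases h2 with h2 | h2
      · exact h2.le
      · exact h2.1.le
    rw [h1, sub_self, zero_mul] at h
    nlinarith [mul_nonneg (sub_nonneg.2 h1'.le) (sub_nonneg.2 h3)]

lemma lexLt_irrefl (x : ℝ × ℝ) : ¬ lexLt x x := by simp [lexLt]

lemma lexLt_trans (x y z : ℝ × ℝ) (h1 : lexLt x y) (h2 : lexLt y z) : lexLt x z := by
  unfold lexLt at *
  rcases h1 with h1 | ⟨h1, h1'⟩ <;> rcases h2 with h2 | ⟨h2, h2'⟩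
  · exact Or.inl (h1.trans h2)
  · exact Or.inl (h2 ▸ h1)
  · exact Or.inl (h1 ▸ h2)
  · exact Or.inr ⟨h1.trans h2, h1'.trans h2'⟩

lemma lexLt_total (x y : ℝ × ℝ) (h : x ≠ y) : lexLt x y ∨ lexLt y x := by
  unfold lexLt
  rcases lt_trichotomy x.1 y.1 with h1 | h1 | h1
  · exact Or.inl (Or.inl h1)
  · rcases lt_trichotomy x.2 y.2 with h2 | h2 | h2
    · exact Or.inl (Or.inr ⟨h1, h2⟩)
    · exact absurd (Prod.ext h1 h2) h
    · exact Or.inr (Or.inr ⟨h1.symm, h2⟩)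
  · exact Or.inr (Or.inl h1)

lemma lexLt_ne {x y : ℝ × ℝ} (h : lexLt x y) : x ≠ y := by
  rintro rfl
  exact lexLt_irrefl _ h

lemma lexLt_asymm {x y : ℝ × ℝ} (h : lexLt x y) : ¬ lexLt y x :=
  fun hyx => lexLt_irrefl _ (lexLt_trans _ _ _ h hyx)

/-- Numbering the pairs of points by slope gives a ranking; `triple` is the fact that the middle
slope of a triangle belongs to the pair of its extreme points. Pairs that span parallel lines are
numbered arbitrarily, as they have no common point. -/
lemma exists_ranking {S : Finset (ℝ × ℝ)} (hgp : GenPos S) (hS : 1 < S.card) :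
    ∃ K : Ranking S, K.lt = lexLt ∧ ∀ a ∈ S, ∀ b ∈ S, ∀ c ∈ S, ∀ d ∈ S, lexLt a b → lexLt c d →
      0 < (b.1 - a.1) * (d.2 - c.2) - (b.2 - a.2) * (d.1 - c.1) → K.rk a b < K.rk c d := by
  set Q := (S ×ˢ S).filter (fun q => lexLt q.1 q.2) with hQ
  have memQ : ∀ {a b}, (a, b) ∈ Q ↔ (a ∈ S ∧ b ∈ S) ∧ lexLt a b := by
    intro a b; simp [hQ]
  obtain ⟨ρ, h1, h2, h3⟩ := exists_rank slopeKey Q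
  have hsurj : ∀ u, 0 ≤ u → u < (Q.card : ℤ) → ∃ q ∈ Q, ρ q = u := by
    intro u hu0 hu1
    have := Finset.surjOn_of_injOn_of_card_le ρ (s := Q) (t := Finset.Ico 0 (Q.card : ℤ))
      (fun q hq => by simpa using h1 q hq) h2 (by simp)
    exact this (by simpa using ⟨hu0, hu1⟩)
  set rk : ℝ × ℝ → ℝ × ℝ → ℤ := fun x y =>
    if lexLt x y then ρ (x, y) else if lexLt y x then ρ (y, x) else 0 with hrk
  have rk_lt : ∀ {x y}, lexLt x y → rk x y = ρ (x, y) := fun h => if_pos h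
  have rk_symm : ∀ x y, rk x y = rk y x := by
    intro x y
    simp only [hrk]
    by_cases h : lexLt x y
    · rw [if_pos h, if_neg (lexLt_asymm h), if_pos h]
    · rw [if_neg h]
      by_cases h' : lexLt y x
      · rw [if_pos h', if_pos h']
      · rw [if_neg h', if_neg h', if_neg h]
  have hmono : ∀ a ∈ S, ∀ b ∈ S, ∀ c ∈ S, ∀ d ∈ S, lexLt a b → lexLt c d →
      0 < (b.1 - a.1) * (d.2 - c.2) - (b.2 - a.2) * (d.1 - c.1) → rk a b < rk c d := by
    intro a ha b hb c hc d hd hab hcd h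
    rw [rk_lt hab, rk_lt hcd]
    exact h3 _ (memQ.2 ⟨⟨ha, hb⟩, hab⟩) _ (memQ.2 ⟨⟨hc, hd⟩, hcd⟩) (slopeKey_lt hab hcd h)
  refine ⟨{ lt := lexLt, lt_irrefl := lexLt_irrefl, lt_trans := lexLt_trans,
            lt_total := lexLt_total, T := Q.card, T_pos := ?_, rk := rk, symm := rk_symm,
            range := ?_, inj := ?_, surj := ?_, triple := ?_ }, rfl, hmono⟩
  · obtain ⟨x, hx, y, hy, hxy⟩ := Finset.one_lt_card.1 hS
    rw [Nat.cast_pos, Finset.card_pos]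
    rcases lexLt_total x y hxy with h | h
    · exact ⟨_, memQ.2 ⟨⟨hx, hy⟩, h⟩⟩
    · exact ⟨_, memQ.2 ⟨⟨hy, hx⟩, h⟩⟩
  · intro x hx y hy hxy
    rcases lexLt_total x y hxy with h | h
    · rw [rk_lt h]; exact h1 _ (memQ.2 ⟨⟨hx, hy⟩, h⟩)
    · rw [rk_symm, rk_lt h]; exact h1 _ (memQ.2 ⟨⟨hy, hx⟩, h⟩)
  · intro x hx y hy x' hx' y' hy' h h' heq
    rw [rk_lt h, rk_lt h'] at heq
    have := h2 (memQ.2 ⟨⟨hx, hy⟩, h⟩) (memQ.2 ⟨⟨hx', hy'⟩, h'⟩) heq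
    simpa using this
  · intro u hu0 hu1
    obtain ⟨⟨x, y⟩, hq, hqu⟩ := hsurj u hu0 hu1
    obtain ⟨⟨hx, hy⟩, h⟩ := memQ.1 hq
    exact ⟨x, hx, y, hy, h, by rw [rk_lt h, hqu]⟩
  · intro a ha b hb c hc hab hbc
    have hac := lexLt_trans _ _ _ hab hbc
    have hne := hgp a ha b hb c hc (lexLt_ne hab) (lexLt_ne hac) (lexLt_ne hbc)
    unfold cross at hne
    rcases lt_or_gt_of_ne hne with h | h
    · right
      exact ⟨hmono b hb c hc a ha c hc hbc hac (by linarith),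
        hmono a ha c hc a ha b hb hac hab (by linarith)⟩
    · left
      exact ⟨hmono a ha b hb a ha c hc hab hac (by linarith),
        hmono a ha c hc b hb c hc hac hbc (by linarith)⟩

/-- When the pair `x, y` is about to be exchanged, the points before it are those on the right of
the directed line from `x` to `y`. -/
lemma prec_iff_cross {S : Finset (ℝ × ℝ)} (hgp : GenPos S) (K : Ranking S) (hlt : K.lt = lexLt)
    (hmono : ∀ a ∈ S, ∀ b ∈ S, ∀ c ∈ S, ∀ d ∈ S, lexLt a b → lexLt c d →
      0 < (b.1 - a.1) * (d.2 - c.2) - (b.2 - a.2) * (d.1 - c.1) → K.rk a b < K.rk c d)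
    {x y z : ℝ × ℝ} (hx : x ∈ S) (hy : y ∈ S) (hz : z ∈ S) (hxy : lexLt x y) :
    K.prec (K.rk x y) z x ↔ cross x y z < 0 := by
  have hsw : ∀ u ∈ S, ∀ v ∈ S, u ≠ v → (K.Sw (K.rk x y) u v ↔ K.rk u v < K.rk x y) := by
    intro u hu v hv huv
    have h1 := K.range x hx y hy (lexLt_ne hxy)
    have h2 := K.range u hu v hv huv
    unfold Ranking.Sw
    by_cases h : K.rk u v < K.rk x y
    · rw [Int.ediv_eq_zero_of_lt (by omega) (by omega)]
      simp [h]
    · have : (K.rk x y - 1 - K.rk u v) / K.T = -1 := by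
        rw [Int.ediv_eq_iff_of_pos K.T_pos]
        constructor <;> linarith
      rw [this]
      simp only [h, iff_false]
      decide
  have hsw0 : ¬ K.Sw (K.rk x y) x y := by rw [hsw x hx y hy (lexLt_ne hxy)]; exact lt_irrefl _
  by_cases hzx : z = x
  · subst hzx
    simp [K.prec_irrefl, cross]
  by_cases hzy : z = y
  · subst hzy
    have h1 : K.prec (K.rk x z) x z := Or.inl ⟨hlt ▸ hxy, hsw0⟩
    have h2 : cross x z z = 0 := by unfold cross; ring
    simp [K.prec_asymm h1, h2]
  have hne := hgp x hx y hy z hz (lexLt_ne hxy) (Ne.symm hzx) (Ne.symm hzy)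
  have hs := hsw z hz x hx hzx
  unfold Ranking.prec
  rw [hs, hlt]
  rcases lexLt_total z x hzx with h | h
  · have h' := lexLt_asymm h
    simp only [h, h', true_and, false_and, or_false]
    rcases lt_or_gt_of_ne hne with hc | hc
    · have := hmono x hx y hy z hz x hx hxy h (by unfold cross at hc; linarith)
      simp only [hc, iff_true]; omega
    · have := hmono z hz x hx x hx y hy h hxy (by unfold cross at hc; linarith)
      simp only [not_lt.2 hc.le, iff_false]; omega
  · have h' := lexLt_asymm h
    simp only [h, h', true_and, false_and, false_or]
    rw [K.symm z x]
    rcases lt_or_gt_of_ne hne with hc | hc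
    · have := hmono x hx z hz x hx y hy h hxy (by unfold cross at hc; linarith)
      simp only [hc, iff_true]; omega
    · have := hmono x hx y hy x hx z hz hxy h (by unfold cross at hc; linarith)
      simp only [not_lt.2 hc.le, iff_false]; omega

/-! ### Balanced swaps and balanced lines -/

lemma sum_filter_wt {R B : Finset (ℝ × ℝ)} (hd : Disjoint R B) (p : ℝ × ℝ → Prop) :
    ∑ z ∈ (R ∪ B).filter p, Sweep.wt R z = ((B.filter p).card : ℤ) - (R.filter p).card := by
  rw [(Sweep.sum_wt hd _ (Finset.filter_subset _ _)).1]
  have h1 : (R ∪ B).filter p ∩ B = B.filter p := by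
    ext z; simp only [Finset.mem_inter, Finset.mem_filter, Finset.mem_union]; tauto
  have h2 : (R ∪ B).filter p ∩ R = R.filter p := by
    ext z; simp only [Finset.mem_inter, Finset.mem_filter, Finset.mem_union]; tauto
  rw [h1, h2]

/-- In general position the line through `x` and `y` contains no other point of the set. -/
lemma wPos_add_wNeg {R B : Finset (ℝ × ℝ)} (hd : Disjoint R B) (hgp : GenPos (R ∪ B))
    {x y : ℝ × ℝ} (hx : x ∈ R ∪ B) (hy : y ∈ R ∪ B) (hxy : x ≠ y) :
    wPos B R x y + wNeg B R x y + Sweep.wt R x + Sweep.wt R y = ∑ z ∈ R ∪ B, Sweep.wt R z := by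
  have h1 : (R ∪ B).filter (fun z => ¬ cross x y z < 0)
      = insert x (insert y ((R ∪ B).filter (fun z => 0 < cross x y z))) := by
    ext z
    simp only [Finset.mem_filter, Finset.mem_insert]
    constructor
    · rintro ⟨hz, h⟩
      by_cases hzx : z = x
      · exact Or.inl hzx
      by_cases hzy : z = y
      · exact Or.inr (Or.inl hzy)
      exact Or.inr (Or.inr ⟨hz, lt_of_le_of_ne (not_lt.1 h)
        (hgp x hx y hy z hz hxy (Ne.symm hzx) (Ne.symm hzy)).symm⟩)
    · rintro (rfl | rfl | ⟨hz, h⟩)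
      · exact ⟨hx, by simp [cross]⟩
      · refine ⟨hy, not_lt.2 (le_of_eq ?_)⟩
        unfold cross; ring
      · exact ⟨hz, not_lt.2 h.le⟩
  have hxx : cross x y x = 0 := by unfold cross; ring
  have hyy : cross x y y = 0 := by unfold cross; ring
  rw [← Finset.sum_filter_add_sum_filter_not (R ∪ B) (fun z => cross x y z < 0), h1,
    Finset.sum_insert (by simp [hxx, hxy]), Finset.sum_insert (by simp [hyy]),
    sum_filter_wt hd, sum_filter_wt hd, wPos, wNeg]
  ring

lemma cross_swap (p q x : ℝ × ℝ) : cross q p x = - cross p q x := by unfold cross; ring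

lemma balancedLine_symm {B R : Finset (ℝ × ℝ)} {δ : ℤ} {p q : ℝ × ℝ}
    (h : BalancedLine B R δ p q) : BalancedLine B R δ q p := by
  unfold BalancedLine wPos wNeg at *
  simp only [cross_swap p q, Left.neg_pos_iff, Left.neg_neg_iff]
  exact ⟨h.2, h.1⟩

/-- A balanced swap at time `u` is the exchange of the two points spanning a balanced line. The
weight of one side is `δ` by definition of the swap, and the weight of the other side follows because
the total weight is `2 * δ` and the two points cancel. Distinct times give distinct lines, since `u` is
recovered as the rank of the pair. -/
lemma exists_balancedPair {R B : Finset (ℝ × ℝ)} {r δ : ℕ} (hd : Disjoint R B)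
    (hR : R.card = r) (hB : B.card = r + 2 * δ) (hgp : GenPos (R ∪ B)) (K : Ranking (R ∪ B))
    (hlt : K.lt = lexLt)
    (hmono : ∀ a ∈ R ∪ B, ∀ b ∈ R ∪ B, ∀ c ∈ R ∪ B, ∀ d ∈ R ∪ B, lexLt a b → lexLt c d →
      0 < (b.1 - a.1) * (d.2 - c.2) - (b.2 - a.2) * (d.1 - c.1) → K.rk a b < K.rk c d)
    {u : ℤ} (hu0 : 0 ≤ u) (huT : u < K.T) (h : K.sweep.BalancedSwap δ u) :
    ∃ q ∈ balancedPairs B R (δ : ℤ), K.rk q.1 q.2 = u := by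
  obtain ⟨x, hx, y, hy, h1, h2, h3, hw, hP⟩ := h
  change K.pos u y = K.pos u x + 1 at h1
  change K.pos (u + 1) x = K.pos u x + 1 at h2
  change K.pos (u + 1) y = K.pos u x at h3
  have p1 : K.prec u x y := (K.pos_lt_iff hx hy).1 (by omega)
  have p2 : K.prec (u + 1) y x := (K.pos_lt_iff hy hx).1 (by omega)
  have hxy : x ≠ y := by rintro rfl; exact K.prec_irrefl _ _ p1
  have hrange := K.range x hx y hy hxy
  have hdvd : K.T ∣ u - K.rk x y := by
    by_contra hc
    rw [← K.sw_succ] at hc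
    refine K.prec_asymm p2 ?_
    unfold Ranking.prec
    rw [hc]
    exact p1
  have hu : u = K.rk x y := by
    have := Int.eq_zero_of_abs_lt_dvd hdvd (by rw [abs_lt]; constructor <;> omega)
    omega
  have hsw : ¬ K.Sw u x y := by
    rw [Ranking.Sw, show u - 1 - K.rk x y = -1 by omega,
      show (-1 : ℤ) / K.T = -1 from (Int.ediv_eq_iff_of_pos K.T_pos).2 ⟨by linarith, by linarith [K.T_pos]⟩]
    decide
  have hl : lexLt x y := by
    rcases p1 with h | h
    · rw [← hlt]; exact h.1
    · exact absurd h.2 hsw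
  have hneg : wNeg B R x y = δ := by
    rw [← hP, wNeg, ← sum_filter_wt hd, Sweep.P, Sweep.pre]
    congr 1
    refine Finset.filter_congr fun z hz => ?_
    change _ ↔ K.pos u z < K.pos u x
    rw [K.pos_lt_iff hz hx, hu]
    exact (prec_iff_cross hgp K hlt hmono hx hy hz hl).symm
  have htot := wPos_add_wNeg hd hgp hx hy hxy
  rw [(Sweep.total hd hR hB).1] at htot
  have hbal : BalancedLine B R δ x y := by
    refine ⟨?_, hneg⟩
    rcases Sweep.wt_cases R x with h | h <;> rcases Sweep.wt_cases R y with h' | h' <;>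
      rw [h.1, h'.1] at hw htot
    · exact absurd rfl hw
    · omega
    · omega
    · exact absurd rfl hw
  rcases Sweep.wt_cases R x with h | h <;> rcases Sweep.wt_cases R y with h' | h'
  · rw [h.1, h'.1] at hw; exact absurd rfl hw
  · refine ⟨(x, y), ?_, hu.symm⟩
    rw [balancedPairs, Finset.mem_filter, Finset.mem_product]
    exact ⟨⟨(Finset.mem_union.1 hx).resolve_left h.2, h'.2⟩, hbal⟩
  · refine ⟨(y, x), ?_, by rw [hu]; exact K.symm _ _⟩
    rw [balancedPairs, Finset.mem_filter, Finset.mem_product]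
    exact ⟨⟨(Finset.mem_union.1 hy).resolve_left h'.2, h.2⟩, balancedLine_symm hbal⟩
  · rw [h.1, h'.1] at hw; exact absurd rfl hw

/-- **Sharir–Welzl.** If `|R| = r`, `|B| = r + 2δ` with `δ ≥ 0`, and
`S = R ∪ B` is in general position, then the number of lines through a blue
and a red point whose two open half-planes both have weight `δ` is at
least `r`. -/
theorem at_least_r_balanced_lines (r δ : ℕ)
    (R B : Finset (ℝ × ℝ)) (hdisj : Disjoint R B)
    (hR : R.card = r) (hB : B.card = r + 2 * δ)
    (hgp : GenPos (R ∪ B)) :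
    r ≤ (balancedPairs B R (δ : ℤ)).card := by
  rcases Nat.eq_zero_or_pos r with h0 | hpos
  · omega
  have hcard : 1 < (R ∪ B).card := by
    rw [Finset.card_union_of_disjoint hdisj]
    omega
  obtain ⟨K, hlt, hmono⟩ := exists_ranking hgp hcard
  refine (K.sweep.card_le_balancedSwaps hdisj hR hB).trans ?_
  refine (Finset.card_le_card ?_).trans
    (Finset.card_image_le (s := balancedPairs B R (δ : ℤ)) (f := fun q => K.rk q.1 q.2))
  intro u hu
  rw [Finset.mem_filter, Finset.mem_Ico] at hu
  obtain ⟨q, hq, hqu⟩ := exists_balancedPair hdisj hR hB hgp K hlt hmono hu.1.1 hu.1.2 hu.2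
  exact Finset.mem_image.2 ⟨q, hq, hqu⟩
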